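/- Let d > 1 and 1 ≤ d₁ ≤ d be integers and let C > 0 be a real constant. There exist constants K > 0 and n₀ (depending only on d, d₁, and C) such that for every set system (X, S) with |X| = n ≥ n₀ satisfying the size-sensitive counting condition with parameters (C, d, d₁), there exists a coloring χ : X → {−1, +1} such that for every S ∈ S, |∑_{x∈S} χ(x)| ≤ K · |S|^{1/2 − d₁/(2d)} · n^{(d₁ − 1)/(2d)} · (log₂ n)^{3/2 + 1/(2d)}. -/

import Mathlib

/-! By a weighted form of Haussler's edge-counting argument, a `δ`-separated family with trace
bound `C * m ^ a * k ^ b`, whose members have at most `k` elements and lie in an `m`-point set, has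
`O(m ^ a * k ^ b / δ ^ (a + b))` members (shallow packing). For every dyadic size `k = 2 ^ l`
choose `δ` so that nets of radius `2 ^ j * δ`, `j = 0, 1, …`, have `O(m / (2 ^ j * log₂ n))` points,
with a small constant. Join each net point to a nearby point of the next coarser net, round the
deviation of a coloring along each such link to a multiple of about `√(δ * log₂ n) / 2 ^ j`, and
discard the colorings for which some difference `S ∆ T` deviates more than a random one would.
So few bits are recorded that two of the remaining colorings agree in all of them and still differ
at more than a tenth of the points. Half their difference is a partial coloring, whose discrepancy
on a set of size `k` is a sum of geometrically decreasing links, hence `O(√(δ * log₂ n))`. Coloring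
the remaining points in the same way takes `O(log₂ n)` rounds, which is the last factor `log₂ n`.
-/

open Finset
open scoped symmDiff

theorem min_add_min_le_min_max_add_min_min {M : Type*} [AddCommMonoid M] [LinearOrder M]
    [IsOrderedAddMonoid M] (a b c d : M) :
    min a b + min c d ≤ min (max a c) (max b d) + min (min a c) (min b d) := by
  rw [← max_add_min (min a b) (min c d), min_min_min_comm a b c d]
  gcongr
  exact max_le (min_le_min (le_max_left a c) (le_max_left b d))
    (min_le_min (le_max_right a c) (le_max_right b d))

section Traces

variable {α : Type*}

/-- The vertices of the cube `2^A` of positive weight. -/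
def supportFamily (A : Finset α) (w : Finset α → ℕ) : Finset (Finset α) :=
  {Q ∈ A.powerset | 0 < w Q}

theorem mem_supportFamily {A Q : Finset α} {w : Finset α → ℕ} :
    Q ∈ supportFamily A w ↔ Q ⊆ A ∧ 0 < w Q := by
  simp only [supportFamily, mem_filter, mem_powerset]

variable [DecidableEq α]

theorem vcDim_le_iff_forall_shatters {𝒜 : Finset (Finset α)} {v : ℕ} :
    𝒜.vcDim ≤ v ↔ ∀ s, 𝒜.Shatters s → #s ≤ v := by
  simp only [vcDim, Finset.sup_le_iff, mem_shatterer]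

theorem exists_shatters_card_eq_vcDim {𝒜 : Finset (Finset α)} (h𝒜 : 𝒜.Nonempty) :
    ∃ s, 𝒜.Shatters s ∧ #s = 𝒜.vcDim := by
  have hne : 𝒜.shatterer.Nonempty := ⟨∅, mem_shatterer.2 (shatters_empty.2 h𝒜)⟩
  obtain ⟨s, hs, hcard⟩ := exists_mem_eq_sup _ hne card
  exact ⟨s, mem_shatterer.1 hs, hcard.symm⟩

/-- For a weight `w` on the vertices of the cube `2^A`, the total weight of its edges in
direction `a`, where an edge weighs as much as its lighter endpoint. -/
def edgeWeight (A : Finset α) (a : α) (w : Finset α → ℕ) : ℕ :=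
  ∑ Q ∈ (A.erase a).powerset, min (w Q) (w (insert a Q))

theorem subset_of_shatters_supportFamily {A B : Finset α} {w : Finset α → ℕ}
    (h : (supportFamily A w).Shatters B) : B ⊆ A := by
  obtain ⟨Q, hQ, hBQ⟩ := h.exists_superset
  exact hBQ.trans (mem_supportFamily.1 hQ).1

theorem vcDim_supportFamily_sup_le {A : Finset α} {x : α} (hx : x ∉ A) (w : Finset α → ℕ) :
    (supportFamily A (w ⊔ w ∘ insert x)).vcDim ≤ (supportFamily (insert x A) w).vcDim := by
  refine vcDim_le_iff_forall_shatters.2 fun B hB => Shatters.card_le_vcDim fun T hT => ?_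
  have hxB : x ∉ B := fun h => hx (subset_of_shatters_supportFamily hB h)
  obtain ⟨Q, hQ, rfl⟩ := hB hT
  obtain ⟨hQA, hpos⟩ := mem_supportFamily.1 hQ
  rcases lt_sup_iff.1 hpos with h | h
  · exact ⟨Q, mem_supportFamily.2 ⟨hQA.trans (subset_insert x A), h⟩, rfl⟩
  · exact ⟨insert x Q, mem_supportFamily.2 ⟨insert_subset_insert x hQA, h⟩,
      inter_insert_of_notMem hxB⟩

theorem vcDim_supportFamily_inf_lt {A : Finset α} {x : α} (hx : x ∉ A) {w : Finset α → ℕ}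
    (hne : (supportFamily A (w ⊓ w ∘ insert x)).Nonempty) :
    (supportFamily A (w ⊓ w ∘ insert x)).vcDim < (supportFamily (insert x A) w).vcDim := by
  obtain ⟨B, hB, hcard⟩ := exists_shatters_card_eq_vcDim hne
  have hxB : x ∉ B := fun h => hx (subset_of_shatters_supportFamily hB h)
  rw [← hcard, ← Nat.add_one_le_iff, ← card_insert_of_notMem hxB]
  refine Shatters.card_le_vcDim fun T hT => ?_
  obtain ⟨Q, hQ, hBQ⟩ := hB (subset_insert_iff.1 hT)
  obtain ⟨hQA, hpos⟩ := mem_supportFamily.1 hQ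
  have hxQ : x ∉ Q := fun h => hx (hQA h)
  by_cases hxT : x ∈ T
  · refine ⟨insert x Q, mem_supportFamily.2
      ⟨insert_subset_insert x hQA, (lt_inf_iff.1 hpos).2⟩, ?_⟩
    rw [← insert_inter_distrib, hBQ, insert_erase hxT]
  · refine ⟨Q, mem_supportFamily.2 ⟨hQA.trans (subset_insert x A), (lt_inf_iff.1 hpos).1⟩, ?_⟩
    rw [insert_inter_of_notMem hxQ, hBQ, erase_eq_of_notMem hxT]

theorem sum_powerset_insert_eq_sup_add_inf {A : Finset α} {x : α} (hx : x ∉ A)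
    (w : Finset α → ℕ) :
    ∑ Q ∈ (insert x A).powerset, w Q =
      ∑ Q ∈ A.powerset, (w ⊔ w ∘ insert x) Q + ∑ Q ∈ A.powerset, (w ⊓ w ∘ insert x) Q := by
  rw [sum_powerset_insert hx, ← sum_add_distrib, ← sum_add_distrib]
  exact sum_congr rfl fun Q _ => (max_add_min (w Q) (w (insert x Q))).symm

theorem edgeWeight_insert_self {A : Finset α} {x : α} (hx : x ∉ A) (w : Finset α → ℕ) :
    edgeWeight (insert x A) x w = ∑ Q ∈ A.powerset, (w ⊓ w ∘ insert x) Q := by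
  rw [edgeWeight, erase_insert hx]
  rfl

theorem edgeWeight_insert_le {A : Finset α} {x a : α} (hx : x ∉ A) (hxa : x ≠ a)
    (w : Finset α → ℕ) :
    edgeWeight (insert x A) a w ≤
      edgeWeight A a (w ⊔ w ∘ insert x) + edgeWeight A a (w ⊓ w ∘ insert x) := by
  rw [edgeWeight, erase_insert_of_ne hxa,
    sum_powerset_insert (fun h => hx (mem_of_mem_erase h)), edgeWeight, edgeWeight,
    ← sum_add_distrib, ← sum_add_distrib]
  refine sum_le_sum fun Q _ => ?_
  rw [Finset.insert_comm a x Q]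
  exact min_add_min_le_min_max_add_min_min ..

theorem sum_edgeWeight_le_vcDim_mul (A : Finset α) (w : Finset α → ℕ) :
    ∑ a ∈ A, edgeWeight A a w ≤ (supportFamily A w).vcDim * ∑ Q ∈ A.powerset, w Q := by
  induction A using Finset.induction_on generalizing w with
  | empty => simp only [sum_empty, zero_le]
  | insert x A hx ih =>
    set w₁ := w ⊔ w ∘ insert x
    set w₂ := w ⊓ w ∘ insert x
    set v := (supportFamily (insert x A) w).vcDim
    have hsup : ∑ a ∈ A, edgeWeight A a w₁ ≤ v * ∑ Q ∈ A.powerset, w₁ Q :=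
      (ih w₁).trans (by gcongr; exact vcDim_supportFamily_sup_le hx w)
    have hinf : ∑ a ∈ A, edgeWeight A a w₂ + ∑ Q ∈ A.powerset, w₂ Q ≤
        v * ∑ Q ∈ A.powerset, w₂ Q := by
      have hstep := Nat.add_le_add_right (ih w₂) (∑ Q ∈ A.powerset, w₂ Q)
      rw [← Nat.succ_mul] at hstep
      obtain hempty | hne := (supportFamily A w₂).eq_empty_or_nonempty
      · have hzero : ∑ Q ∈ A.powerset, w₂ Q = 0 := sum_eq_zero fun Q hQ => by
          by_contra hpos
          exact notMem_empty Q
            (hempty ▸ mem_supportFamily.2 ⟨mem_powerset.1 hQ, Nat.pos_of_ne_zero hpos⟩)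
        simpa only [hzero, mul_zero] using hstep
      · exact hstep.trans (by gcongr; exact vcDim_supportFamily_inf_lt hx hne)
    have hsplit : ∑ a ∈ A, edgeWeight (insert x A) a w ≤
        ∑ a ∈ A, edgeWeight A a w₁ + ∑ a ∈ A, edgeWeight A a w₂ := by
      rw [← sum_add_distrib]
      exact sum_le_sum fun a ha => edgeWeight_insert_le hx (ne_of_mem_of_not_mem ha hx).symm w
    rw [sum_insert hx, edgeWeight_insert_self hx, sum_powerset_insert_eq_sup_add_inf hx, mul_add]
    linarith

/-- The number of members of `𝒯` whose trace on `A` is `Q`. -/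
def traceMult (𝒯 : Finset (Finset α)) (A Q : Finset α) : ℕ :=
  #{T ∈ 𝒯 | T ∩ A = Q}

theorem sum_traceMult (𝒯 : Finset (Finset α)) (A : Finset α) :
    ∑ Q ∈ A.powerset, traceMult 𝒯 A Q = #𝒯 :=
  (card_eq_sum_card_fiberwise fun _ _ => mem_coe.2 (mem_powerset.2 inter_subset_right)).symm

theorem vcDim_supportFamily_traceMult_le (𝒯 : Finset (Finset α)) (A : Finset α) :
    (supportFamily A (traceMult 𝒯 A)).vcDim ≤ 𝒯.vcDim := by
  refine vcDim_le_iff_forall_shatters.2 fun B hB => Shatters.card_le_vcDim fun T hT => ?_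
  obtain ⟨Q, hQ, rfl⟩ := hB hT
  obtain ⟨R, hR⟩ := card_pos.1 (mem_supportFamily.1 hQ).2
  obtain ⟨hR𝒯, rfl⟩ := mem_filter.1 hR
  have hBA : B ⊆ A := subset_of_shatters_supportFamily hB
  exact ⟨R, hR𝒯, by rw [inter_comm R A, ← inter_assoc, inter_eq_left.2 hBA]⟩

theorem sum_edgeWeight_traceMult_le (𝒯 : Finset (Finset α)) (A : Finset α) :
    ∑ a ∈ A, edgeWeight A a (traceMult 𝒯 A) ≤ 𝒯.vcDim * #𝒯 := by
  calc ∑ a ∈ A, edgeWeight A a (traceMult 𝒯 A)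
      ≤ (supportFamily A (traceMult 𝒯 A)).vcDim * ∑ Q ∈ A.powerset, traceMult 𝒯 A Q :=
        sum_edgeWeight_le_vcDim_mul A _
    _ ≤ 𝒯.vcDim * #𝒯 := by
        rw [sum_traceMult]
        exact Nat.mul_le_mul_right _ (vcDim_supportFamily_traceMult_le 𝒯 A)

/-- Any two distinct members of `𝒯` differ in at least `δ` elements. -/
def IsSeparatedFamily (δ : ℝ) (𝒯 : Finset (Finset α)) : Prop :=
  (𝒯 : Set (Finset α)).Pairwise fun S T => δ ≤ #(S ∆ T)

theorem IsSeparatedFamily.subset {δ : ℝ} {𝒯 𝒢 : Finset (Finset α)} (h : IsSeparatedFamily δ 𝒯)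
    (h𝒢 : 𝒢 ⊆ 𝒯) : IsSeparatedFamily δ 𝒢 :=
  Set.Pairwise.mono (coe_subset.2 h𝒢) h

theorem IsSeparatedFamily.mul_card_sub_one_le {δ : ℝ} {𝒯 : Finset (Finset α)}
    (h : IsSeparatedFamily δ 𝒯) :
    δ * (#𝒯 * ((#𝒯 : ℝ) - 1)) ≤ ∑ S ∈ 𝒯, ∑ T ∈ 𝒯, (#(S ∆ T) : ℝ) := by
  have hrow : ∀ S ∈ 𝒯, ((#𝒯 : ℝ) - 1) * δ ≤ ∑ T ∈ 𝒯, (#(S ∆ T) : ℝ) := fun S hS =>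
    calc ((#𝒯 : ℝ) - 1) * δ = ∑ _T ∈ 𝒯.erase S, δ := by
          rw [sum_const, nsmul_eq_mul, cast_card_erase_of_mem hS]
      _ ≤ ∑ T ∈ 𝒯.erase S, (#(S ∆ T) : ℝ) :=
          sum_le_sum fun T hT => h hS (mem_of_mem_erase hT) (ne_of_mem_erase hT).symm
      _ ≤ ∑ T ∈ 𝒯, (#(S ∆ T) : ℝ) :=
          sum_le_sum_of_subset_of_nonneg (erase_subset S 𝒯) fun _ _ _ => Nat.cast_nonneg _
  calc δ * (#𝒯 * ((#𝒯 : ℝ) - 1)) = ∑ _S ∈ 𝒯, ((#𝒯 : ℝ) - 1) * δ := by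
        rw [sum_const, nsmul_eq_mul]; ring
    _ ≤ ∑ S ∈ 𝒯, ∑ T ∈ 𝒯, (#(S ∆ T) : ℝ) := sum_le_sum hrow

theorem card_symmDiff_eq_add (S T : Finset α) : #(S ∆ T) = #(S \ T) + #(T \ S) := by
  rw [Finset.symmDiff_def, card_union_of_disjoint disjoint_sdiff_sdiff]

theorem sum_sum_card_symmDiff {𝒯 : Finset (Finset α)} {Y : Finset α} (hY : ∀ T ∈ 𝒯, T ⊆ Y) :
    ∑ S ∈ 𝒯, ∑ T ∈ 𝒯, #(S ∆ T) = 2 * ∑ a ∈ Y, #{T ∈ 𝒯 | a ∉ T} * #{T ∈ 𝒯 | a ∈ T} := by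
  have hsdiff : ∑ a ∈ Y, #{T ∈ 𝒯 | a ∉ T} * #{T ∈ 𝒯 | a ∈ T} = ∑ S ∈ 𝒯, ∑ T ∈ 𝒯, #(T \ S) := by
    simp_rw [← card_product, ← filter_product (s := 𝒯) (t := 𝒯) (p := (_ ∉ ·)) (q := (_ ∈ ·))]
    rw [← sum_product']
    refine (sum_card_bipartiteAbove_eq_sum_card_bipartiteBelow
      fun (p : Finset α × Finset α) a => a ∉ p.1 ∧ a ∈ p.2).symm.trans ?_
    refine sum_congr rfl fun p hp => congrArg card ?_
    ext a
    have hpY := hY p.2 (mem_product.1 hp).2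
    simp only [mem_bipartiteAbove, mem_sdiff]
    exact ⟨fun h => ⟨h.2.2, h.2.1⟩, fun h => ⟨hpY h.1, h.2, h.1⟩⟩
  simp_rw [card_symmDiff_eq_add, sum_add_distrib]
  rw [sum_comm, ← hsdiff, two_mul]

/-- The smaller of the numbers of members of `𝒯` avoiding, respectively containing, `a`. -/
def minorityCount (𝒯 : Finset (Finset α)) (a : α) : ℕ :=
  min #{T ∈ 𝒯 | a ∉ T} #{T ∈ 𝒯 | a ∈ T}

theorem card_mul_card_le_card_mul_minorityCount (𝒯 : Finset (Finset α)) (a : α) :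
    #{T ∈ 𝒯 | a ∉ T} * #{T ∈ 𝒯 | a ∈ T} ≤ #𝒯 * minorityCount 𝒯 a := by
  rw [minorityCount, ← max_mul_min]
  gcongr
  exact max_le (card_filter_le _ _) (card_filter_le _ _)

theorem IsSeparatedFamily.mul_card_sub_one_le_sum_minorityCount {δ : ℝ} {𝒯 : Finset (Finset α)}
    {Y : Finset α} (h : IsSeparatedFamily δ 𝒯) (hY : ∀ T ∈ 𝒯, T ⊆ Y) (hne : 𝒯.Nonempty) :
    δ / 2 * ((#𝒯 : ℝ) - 1) ≤ ∑ a ∈ Y, (minorityCount 𝒯 a : ℝ) := by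
  have hcard : (0 : ℝ) < #𝒯 := Nat.cast_pos.2 hne.card_pos
  refine le_of_mul_le_mul_left ?_ hcard
  have hdouble : ∑ S ∈ 𝒯, ∑ T ∈ 𝒯, (#(S ∆ T) : ℝ) ≤
      2 * (#𝒯 * ∑ a ∈ Y, (minorityCount 𝒯 a : ℝ)) := by
    norm_cast
    rw [sum_sum_card_symmDiff hY, mul_sum Y _ #𝒯]
    exact Nat.mul_le_mul_left 2
      (sum_le_sum fun a _ => card_mul_card_le_card_mul_minorityCount 𝒯 a)
  linarith [h.mul_card_sub_one_le]

theorem minorityCount_eq_zero_of_forall_inter_eq {𝒯 : Finset (Finset α)} {A Q : Finset α} {a : α}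
    (hA : ∀ T ∈ 𝒯, T ∩ A = Q) (ha : a ∈ A) : minorityCount 𝒯 a = 0 := by
  have hiff : ∀ T ∈ 𝒯, (a ∈ T ↔ a ∈ Q) := fun T hT => by
    simp only [← hA T hT, mem_inter, ha, and_true]
  rw [minorityCount, filter_congr hiff, filter_congr fun T hT => not_congr (hiff T hT)]
  by_cases haQ : a ∈ Q
  · simp only [haQ, not_true_eq_false, filter_false, card_empty, Nat.zero_min]
  · simp only [haQ, filter_false, card_empty, Nat.min_zero]

theorem traceMult_insert_of_subset {A Q : Finset α} {a : α} (𝒯 : Finset (Finset α)) (ha : a ∉ A)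
    (hQ : Q ⊆ A) : traceMult 𝒯 (insert a A) Q = #{T ∈ {T ∈ 𝒯 | T ∩ A = Q} | a ∉ T} := by
  rw [traceMult, filter_filter]
  congr 2 with T
  by_cases haT : a ∈ T
  · have : insert a (T ∩ A) ≠ Q := fun h => ha (hQ (h ▸ mem_insert_self a _))
    simp only [inter_insert_of_mem haT, haT, this, not_true_eq_false, and_false]
  · simp only [inter_insert_of_notMem haT, haT, not_false_eq_true, and_true]

theorem traceMult_insert_insert {A Q : Finset α} {a : α} (𝒯 : Finset (Finset α)) (ha : a ∉ A)
    (hQ : Q ⊆ A) : traceMult 𝒯 (insert a A) (insert a Q) = #{T ∈ {T ∈ 𝒯 | T ∩ A = Q} | a ∈ T} := by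
  rw [traceMult, filter_filter]
  congr 2 with T
  have haTA : a ∉ T ∩ A := fun h => ha (mem_inter.1 h).2
  by_cases haT : a ∈ T
  · have haQ : a ∉ Q := fun h => ha (hQ h)
    have hinj : insert a (T ∩ A) = insert a Q ↔ T ∩ A = Q :=
      ⟨fun h => by rw [← erase_insert haTA, h, erase_insert haQ], congrArg (insert a)⟩
    simp only [inter_insert_of_mem haT, haT, hinj, and_true]
  · have : T ∩ A ≠ insert a Q := fun h => haTA (h ▸ mem_insert_self a Q)
    simp only [inter_insert_of_notMem haT, haT, this, and_false]

theorem edgeWeight_insert_traceMult {A : Finset α} {a : α} (𝒯 : Finset (Finset α)) (ha : a ∉ A) :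
    edgeWeight (insert a A) a (traceMult 𝒯 (insert a A)) =
      ∑ Q ∈ A.powerset, minorityCount {T ∈ 𝒯 | T ∩ A = Q} a := by
  rw [edgeWeight, erase_insert ha]
  refine sum_congr rfl fun Q hQ => ?_
  have hQA := mem_powerset.1 hQ
  rw [traceMult_insert_of_subset 𝒯 ha hQA, traceMult_insert_insert 𝒯 ha hQA, minorityCount]

theorem IsSeparatedFamily.mul_card_sub_card_image_inter_le {δ : ℝ} {𝒯 : Finset (Finset α)}
    {Y : Finset α} (h : IsSeparatedFamily δ 𝒯) (hY : ∀ T ∈ 𝒯, T ⊆ Y) (A : Finset α) :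
    δ / 2 * ((#𝒯 : ℝ) - #(𝒯.image (· ∩ A))) ≤
      ∑ a ∈ Y \ A, (edgeWeight (insert a A) a (traceMult 𝒯 (insert a A)) : ℝ) := by
  have hclass : ∀ Q ∈ 𝒯.image (· ∩ A), δ / 2 * ((traceMult 𝒯 A Q : ℝ) - 1) ≤
      ∑ a ∈ Y \ A, (minorityCount {T ∈ 𝒯 | T ∩ A = Q} a : ℝ) := fun Q hQ => by
    obtain ⟨T, hT, hTQ⟩ := mem_image.1 hQ
    refine ((h.subset (filter_subset _ 𝒯)).mul_card_sub_one_le_sum_minorityCount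
      (fun T hT => hY T (mem_filter.1 hT).1) ⟨T, mem_filter.2 ⟨hT, hTQ⟩⟩).trans_eq
      (sum_subset sdiff_subset fun a ha haA => ?_).symm
    rw [minorityCount_eq_zero_of_forall_inter_eq (fun T hT => (mem_filter.1 hT).2)
      (by simpa [ha] using haA), Nat.cast_zero]
  have himage : 𝒯.image (· ∩ A) ⊆ A.powerset :=
    image_subset_iff.2 fun T _ => mem_powerset.2 inter_subset_right
  have hcard : (#𝒯 : ℝ) = ∑ Q ∈ 𝒯.image (· ∩ A), (traceMult 𝒯 A Q : ℝ) :=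
    mod_cast card_eq_sum_card_image (· ∩ A) 𝒯
  calc δ / 2 * ((#𝒯 : ℝ) - #(𝒯.image (· ∩ A)))
      = ∑ Q ∈ 𝒯.image (· ∩ A), δ / 2 * ((traceMult 𝒯 A Q : ℝ) - 1) := by
        rw [← mul_sum, sum_sub_distrib, ← hcard, sum_const, nsmul_one]
    _ ≤ ∑ Q ∈ 𝒯.image (· ∩ A), ∑ a ∈ Y \ A, (minorityCount {T ∈ 𝒯 | T ∩ A = Q} a : ℝ) :=
        sum_le_sum hclass
    _ ≤ ∑ Q ∈ A.powerset, ∑ a ∈ Y \ A, (minorityCount {T ∈ 𝒯 | T ∩ A = Q} a : ℝ) :=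
        sum_le_sum_of_subset_of_nonneg himage fun _ _ _ => by positivity
    _ = ∑ a ∈ Y \ A, (edgeWeight (insert a A) a (traceMult 𝒯 (insert a A)) : ℝ) := by
        rw [sum_comm]
        refine sum_congr rfl fun a ha => ?_
        rw [edgeWeight_insert_traceMult 𝒯 (mem_sdiff.1 ha).2, Nat.cast_sum]

theorem sum_powersetCard_sum_sdiff {M : Type*} [AddCommMonoid M] (Y : Finset α) (t : ℕ)
    (f : Finset α → α → M) :
    ∑ A ∈ Y.powersetCard t, ∑ a ∈ Y \ A, f (insert a A) a =
      ∑ B ∈ Y.powersetCard (t + 1), ∑ a ∈ B, f B a := by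
  rw [sum_sigma', sum_sigma']
  refine sum_bij' (fun p _ => ⟨insert p.2 p.1, p.2⟩) (fun p _ => ⟨p.1.erase p.2, p.2⟩)
    ?_ ?_ ?_ ?_ fun _ _ => rfl
  all_goals simp only [mem_sigma, mem_powersetCard, mem_sdiff, and_imp, Sigma.forall]
  · exact fun A a hA ht ha haA => ⟨⟨insert_subset ha hA, by rw [card_insert_of_notMem haA, ht]⟩,
      mem_insert_self a A⟩
  · exact fun B a hB ht ha => ⟨⟨(erase_subset a B).trans hB, by
      rw [card_erase_of_mem ha, ht, Nat.add_sub_cancel]⟩, hB ha, notMem_erase a B⟩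
  · exact fun A a _ _ _ haA => by rw [erase_insert haA]
  · exact fun B a _ _ ha => by rw [insert_erase ha]

theorem IsSeparatedFamily.mul_sum_card_sub_card_image_inter_le {δ : ℝ} {𝒯 : Finset (Finset α)}
    {Y : Finset α} (h : IsSeparatedFamily δ 𝒯) (hY : ∀ T ∈ 𝒯, T ⊆ Y) (t : ℕ) :
    δ / 2 * ∑ A ∈ Y.powersetCard t, ((#𝒯 : ℝ) - #(𝒯.image (· ∩ A))) ≤
      (#Y).choose (t + 1) * (𝒯.vcDim * #𝒯) :=
  calc δ / 2 * ∑ A ∈ Y.powersetCard t, ((#𝒯 : ℝ) - #(𝒯.image (· ∩ A)))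
      ≤ ∑ A ∈ Y.powersetCard t,
          ∑ a ∈ Y \ A, (edgeWeight (insert a A) a (traceMult 𝒯 (insert a A)) : ℝ) := by
        rw [mul_sum]
        exact sum_le_sum fun A _ => h.mul_card_sub_card_image_inter_le hY A
    _ = ∑ B ∈ Y.powersetCard (t + 1), ∑ a ∈ B, (edgeWeight B a (traceMult 𝒯 B) : ℝ) :=
        sum_powersetCard_sum_sdiff Y t fun B a => (edgeWeight B a (traceMult 𝒯 B) : ℝ)
    _ ≤ ∑ _B ∈ Y.powersetCard (t + 1), (𝒯.vcDim * #𝒯 : ℝ) :=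
        sum_le_sum fun B _ => mod_cast sum_edgeWeight_traceMult_le 𝒯 B
    _ = (#Y).choose (t + 1) * (𝒯.vcDim * #𝒯) := by
        rw [sum_const, card_powersetCard, nsmul_eq_mul]

theorem IsSeparatedFamily.sum_card_sub_card_image_inter_le {δ : ℝ} {𝒯 : Finset (Finset α)}
    {Y : Finset α} {t : ℕ} (h : IsSeparatedFamily δ 𝒯) (hY : ∀ T ∈ 𝒯, T ⊆ Y) (hδ : 0 < δ)
    (ht : 4 * #Y * 𝒯.vcDim ≤ δ * (t + 1)) :
    ∑ A ∈ Y.powersetCard t, ((#𝒯 : ℝ) - #(𝒯.image (· ∩ A))) ≤ (#Y).choose t * #𝒯 / 2 := by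
  have hchoose : ((#Y).choose (t + 1) : ℝ) * (t + 1) ≤ (#Y).choose t * #Y := by
    exact_mod_cast (Nat.choose_succ_right_eq (#Y) t).trans_le
      (Nat.mul_le_mul_left _ (Nat.sub_le _ t))
  refine le_of_mul_le_mul_left (a := δ / 2 * (t + 1)) ?_ (by positivity)
  calc δ / 2 * (t + 1) * ∑ A ∈ Y.powersetCard t, ((#𝒯 : ℝ) - #(𝒯.image (· ∩ A)))
      = δ / 2 * (∑ A ∈ Y.powersetCard t, ((#𝒯 : ℝ) - #(𝒯.image (· ∩ A)))) * (t + 1) := by ring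
    _ ≤ (#Y).choose (t + 1) * (𝒯.vcDim * #𝒯) * (t + 1) :=
        mul_le_mul_of_nonneg_right (h.mul_sum_card_sub_card_image_inter_le hY t) (by positivity)
    _ = (#Y).choose (t + 1) * (t + 1) * (𝒯.vcDim * #𝒯) := by ring
    _ ≤ (#Y).choose t * #Y * (𝒯.vcDim * #𝒯) := by gcongr
    _ = 4 * #Y * 𝒯.vcDim * ((#Y).choose t * #𝒯 / 4) := by ring
    _ ≤ δ * (t + 1) * ((#Y).choose t * #𝒯 / 4) := by gcongr
    _ = δ / 2 * (t + 1) * ((#Y).choose t * #𝒯 / 2) := by ring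

theorem card_mul_sum_card_inter_powersetCard {T Y : Finset α} (hT : T ⊆ Y) (t : ℕ) :
    #Y * ∑ A ∈ Y.powersetCard t, #(T ∩ A) = #T * (t * (#Y).choose t) := by
  obtain _ | t := t
  · simp
  obtain hY | hY := Y.eq_empty_or_nonempty
  · simp [hY, subset_empty.1 (hY ▸ hT)]
  have hcount : ∀ x ∈ T, #{A ∈ Y.powersetCard (t + 1) | x ∈ A} = (#Y - 1).choose t := fun x hx => by
    simpa using card_filter_powersetCard_subset {x} Y (t + 1)
      (singleton_subset_iff.2 (hT hx)) (by simp)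
  have hchoose : #Y * (#Y - 1).choose t = (t + 1) * (#Y).choose (t + 1) := by
    have := Nat.add_one_mul_choose_eq (#Y - 1) t
    rwa [Nat.sub_add_cancel hY.card_pos, mul_comm (Nat.choose _ _)] at this
  rw [sum_card_inter hcount, ← hchoose, mul_left_comm]

theorem sum_powersetCard_card_filter_lt_card_inter_le {𝒯 : Finset (Finset α)} {Y : Finset α}
    {t κ k : ℕ} (hY : ∀ T ∈ 𝒯, T ⊆ Y) (hne : Y.Nonempty) (hκ : 0 < κ) (hk : ∀ T ∈ 𝒯, #T ≤ k)
    (ht : 4 * k * t ≤ #Y * κ) :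
    ∑ A ∈ Y.powersetCard t, (#{T ∈ 𝒯 | κ < #(T ∩ A)} : ℝ) ≤ (#Y).choose t * #𝒯 / 4 := by
  have hmarkov : ∀ A, κ * #{T ∈ 𝒯 | κ < #(T ∩ A)} ≤ ∑ T ∈ 𝒯, #(T ∩ A) := fun A =>
    calc κ * #{T ∈ 𝒯 | κ < #(T ∩ A)} = ∑ T ∈ 𝒯 with κ < #(T ∩ A), κ := by
          rw [sum_const, smul_eq_mul, mul_comm]
      _ ≤ ∑ T ∈ 𝒯 with κ < #(T ∩ A), #(T ∩ A) :=
          sum_le_sum fun T hT => (mem_filter.1 hT).2.le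
      _ ≤ ∑ T ∈ 𝒯, #(T ∩ A) := sum_le_sum_of_subset (filter_subset _ 𝒯)
  have hcount : #Y * (κ * ∑ A ∈ Y.powersetCard t, #{T ∈ 𝒯 | κ < #(T ∩ A)}) ≤
      #𝒯 * (k * (t * (#Y).choose t)) :=
    calc #Y * (κ * ∑ A ∈ Y.powersetCard t, #{T ∈ 𝒯 | κ < #(T ∩ A)})
        ≤ #Y * ∑ A ∈ Y.powersetCard t, ∑ T ∈ 𝒯, #(T ∩ A) := by
          rw [mul_sum _ _ κ]
          exact Nat.mul_le_mul_left _ (sum_le_sum fun A _ => hmarkov A)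
      _ = ∑ T ∈ 𝒯, #T * (t * (#Y).choose t) := by
          rw [sum_comm, mul_sum]
          exact sum_congr rfl fun T hT => card_mul_sum_card_inter_powersetCard (hY T hT) t
      _ ≤ #𝒯 * (k * (t * (#Y).choose t)) :=
          sum_le_card_nsmul _ _ _ fun T hT => Nat.mul_le_mul_right _ (hk T hT)
  have hpos : (0 : ℝ) < #Y * κ := mod_cast Nat.mul_pos hne.card_pos hκ
  refine le_of_mul_le_mul_left ?_ hpos
  calc (#Y * κ : ℝ) * ∑ A ∈ Y.powersetCard t, (#{T ∈ 𝒯 | κ < #(T ∩ A)} : ℝ)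
      ≤ #𝒯 * (k * (t * (#Y).choose t)) := by rw [mul_assoc]; exact_mod_cast hcount
    _ = (4 * k * t : ℕ) * ((#Y).choose t * #𝒯 / 4 : ℝ) := by push_cast; ring
    _ ≤ (#Y * κ : ℕ) * ((#Y).choose t * #𝒯 / 4 : ℝ) := by gcongr
    _ = #Y * κ * ((#Y).choose t * #𝒯 / 4 : ℝ) := by push_cast; ring

theorem card_image_inter_le_add (𝒯 : Finset (Finset α)) (A : Finset α) (κ : ℕ) :
    #(𝒯.image (· ∩ A)) ≤
      #{Q ∈ 𝒯.image (· ∩ A) | #Q ≤ κ} + #{T ∈ 𝒯 | κ < #(T ∩ A)} := by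
  rw [← card_filter_add_card_filter_not (s := 𝒯.image (· ∩ A)) (fun Q => #Q ≤ κ)]
  simp only [filter_image, not_le]
  exact Nat.add_le_add_left card_image_le _

/-- Restrict to a random `t`-subset `A` of `Y`: by Haussler's inequality a separated family keeps
at least half of its members as distinct traces on `A`, and by Markov's inequality at most a
quarter of them have a trace larger than `κ`. -/
theorem IsSeparatedFamily.card_le_four_mul {δ U : ℝ} {𝒯 : Finset (Finset α)} {Y : Finset α}
    {t κ k : ℕ} (h : IsSeparatedFamily δ 𝒯) (hY : ∀ T ∈ 𝒯, T ⊆ Y) (hk : ∀ T ∈ 𝒯, #T ≤ k)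
    (hδ : 0 < δ) (hne : Y.Nonempty) (hκ : 0 < κ) (htY : t ≤ #Y)
    (hvc : 4 * #Y * 𝒯.vcDim ≤ δ * (t + 1)) (ht : 4 * k * t ≤ #Y * κ)
    (hU : ∀ A ∈ Y.powersetCard t, (#{Q ∈ 𝒯.image (· ∩ A) | #Q ≤ κ} : ℝ) ≤ U) :
    #𝒯 ≤ 4 * U := by
  have hchoose : (0 : ℝ) < (#Y).choose t := mod_cast Nat.choose_pos htY
  have hlost := h.sum_card_sub_card_image_inter_le hY hδ hvc
  have hdeep := sum_powersetCard_card_filter_lt_card_inter_le hY hne hκ hk ht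
  have htrace : ∑ A ∈ Y.powersetCard t, (#(𝒯.image (· ∩ A)) : ℝ) ≤
      (#Y).choose t * U + ∑ A ∈ Y.powersetCard t, (#{T ∈ 𝒯 | κ < #(T ∩ A)} : ℝ) := by
    rw [← card_powersetCard, ← nsmul_eq_mul, ← sum_const, ← sum_add_distrib]
    refine sum_le_sum fun A hA => ?_
    have hsplit : (#(𝒯.image (· ∩ A)) : ℝ) ≤
        #{Q ∈ 𝒯.image (· ∩ A) | #Q ≤ κ} + #{T ∈ 𝒯 | κ < #(T ∩ A)} :=
      mod_cast card_image_inter_le_add 𝒯 A κ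
    linarith [hU A hA]
  rw [sum_sub_distrib, sum_const, card_powersetCard, nsmul_eq_mul] at hlost
  exact le_of_mul_le_mul_left (by linarith) hchoose

theorem exists_forall_le_of_two_pow_le (C : ℝ) (D : ℕ) :
    ∃ v : ℕ, ∀ b : ℕ, (2 : ℝ) ^ b ≤ C * (b : ℝ) ^ D → b ≤ v := by
  have hlim : Filter.Tendsto (fun n : ℕ => C * ((n : ℝ) ^ D / (2 : ℝ) ^ n)) Filter.atTop
      (nhds 0) := by
    simpa only [mul_zero] using (tendsto_pow_const_div_const_pow_of_one_lt D one_lt_two).const_mul C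
  obtain ⟨v, hv⟩ := Filter.eventually_atTop.1 (hlim.eventually_lt_const zero_lt_one)
  refine ⟨v, fun b hb => ?_⟩
  by_contra! hvb
  have hlt := hv b hvb.le
  rw [← mul_div_assoc, div_lt_one (by positivity)] at hlt
  exact hlt.not_ge hb

/-- A bound for the VC dimension of families with trace bound `C * m ^ a * k ^ b`, `a + b = D`:
a shattered set of size `v` has `2 ^ v` traces, but the trace bound allows only `C * v ^ D`. -/
noncomputable def vcBound (C : ℝ) (D : ℕ) : ℕ :=
  (exists_forall_le_of_two_pow_le C D).choose

theorem le_vcBound {C : ℝ} {D v : ℕ} (h : (2 : ℝ) ^ v ≤ C * (v : ℝ) ^ D) : v ≤ vcBound C D :=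
  (exists_forall_le_of_two_pow_le C D).choose_spec v h

/-- The size-sensitive counting condition on `X`, for two independent exponents `a` (written `d₁`
in the theorem) and `b` (written `d - d₁`), and without the restriction `k ≤ #Y`. -/
def HasTraceBound (X : Finset α) (𝒯 : Finset (Finset α)) (C : ℝ) (a b : ℕ) : Prop :=
  ∀ Y ⊆ X, Y.Nonempty → ∀ k : ℕ, 0 < k →
    (#{Q ∈ 𝒯.image (· ∩ Y) | #Q ≤ k} : ℝ) ≤ C * (#Y : ℝ) ^ a * (k : ℝ) ^ b

namespace HasTraceBound

variable {X Y : Finset α} {𝒯 𝒢 : Finset (Finset α)} {C : ℝ} {a b : ℕ}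

theorem mono (h : HasTraceBound X 𝒯 C a b) (hY : Y ⊆ X) (h𝒢 : 𝒢 ⊆ 𝒯) :
    HasTraceBound Y 𝒢 C a b := fun Z hZ hne k hk =>
  (Nat.cast_le.2 (card_le_card (filter_subset_filter _ (image_subset_image h𝒢)))).trans
    (h Z (hZ.trans hY) hne k hk)

theorem trace (h : HasTraceBound X 𝒯 C a b) (hY : Y ⊆ X) :
    HasTraceBound Y (𝒯.image (· ∩ Y)) C a b := fun Z hZ hne k hk => by
  have himage : (𝒯.image (· ∩ Y)).image (· ∩ Z) = 𝒯.image (· ∩ Z) := by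
    simp only [image_image, Function.comp_def, inter_assoc, inter_eq_right.2 hZ]
  rw [himage]
  exact h Z (hZ.trans hY) hne k hk

theorem nonneg (h : HasTraceBound X 𝒯 C a b) (hX : X.Nonempty) : 0 ≤ C := by
  have hbound := (Nat.cast_nonneg _).trans (h X Subset.rfl hX 1 one_pos)
  rw [Nat.cast_one, one_pow, mul_one] at hbound
  exact nonneg_of_mul_nonneg_left hbound (pow_pos (Nat.cast_pos.2 hX.card_pos) a)

theorem card_le (h : HasTraceBound X 𝒯 C a b) (hX : X.Nonempty) (hsub : ∀ T ∈ 𝒯, T ⊆ X) {k : ℕ}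
    (hpos : 0 < k) (hk : ∀ T ∈ 𝒯, #T ≤ k) : #𝒯 ≤ C * (#X : ℝ) ^ a * (k : ℝ) ^ b := by
  have hbound := h X Subset.rfl hX k hpos
  have himage : 𝒯.image (· ∩ X) = 𝒯 :=
    (image_congr fun T hT => inter_eq_left.2 (hsub T hT)).trans image_id'
  rwa [himage, filter_true_of_mem hk] at hbound

theorem vcDim_le (h : HasTraceBound X 𝒯 C a b) (hsub : ∀ T ∈ 𝒯, T ⊆ X) :
    𝒯.vcDim ≤ vcBound C (a + b) := by
  refine vcDim_le_iff_forall_shatters.2 fun B hB => ?_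
  obtain rfl | hne := B.eq_empty_or_nonempty
  · exact Nat.zero_le _
  obtain ⟨T, hT, hBT⟩ := hB.exists_superset
  have hbound := h B (hBT.trans (hsub T hT)) hne #B hne.card_pos
  simp_rw [inter_comm _ B, shatters_iff.1 hB] at hbound
  rw [filter_true_of_mem fun Q hQ => card_le_card (mem_powerset.1 hQ), card_powerset, mul_assoc,
    ← pow_add] at hbound
  exact le_vcBound (mod_cast hbound)

end HasTraceBound

theorem card_le_of_isSeparatedFamily_of_hasTraceBound {Y : Finset α} {𝒯 : Finset (Finset α)}
    {C δ : ℝ} {a b t κ k : ℕ} (h : HasTraceBound Y 𝒯 C a b) (hsep : IsSeparatedFamily δ 𝒯)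
    (hY : ∀ T ∈ 𝒯, T ⊆ Y) (hk : ∀ T ∈ 𝒯, #T ≤ k) (hδ : 0 < δ) (hκ : 0 < κ) (ht : 0 < t)
    (htY : t ≤ #Y) (hvt : 4 * #Y * (vcBound C (a + b)) ≤ δ * t) (hκt : 4 * k * t ≤ (#Y * κ : ℝ)) :
    #𝒯 ≤ 4 * (C * (t : ℝ) ^ a * (κ : ℝ) ^ b) := by
  have hvc : (𝒯.vcDim : ℝ) ≤ vcBound C (a + b) := mod_cast h.vcDim_le hY
  refine hsep.card_le_four_mul hY hk hδ (card_pos.1 (ht.trans_le htY)) hκ htY ?_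
    (mod_cast hκt) fun A hA => ?_
  · calc 4 * #Y * (𝒯.vcDim : ℝ) ≤ 4 * #Y * vcBound C (a + b) := by gcongr
      _ ≤ δ * t := hvt
      _ ≤ δ * (t + 1) := by gcongr; linarith
  · obtain ⟨hAY, hAt⟩ := mem_powersetCard.1 hA
    have hbound := h A hAY (card_pos.1 (hAt ▸ ht)) κ hκ
    rwa [hAt] at hbound

/-- The constant of the shallow packing lemma. -/
noncomputable def packingConst (C : ℝ) (a b : ℕ) : ℝ :=
  4 * C * (16 * vcBound C (a + b) + 5) ^ (a + b)

theorem packingConst_nonneg {C : ℝ} (hC : 0 ≤ C) (a b : ℕ) : 0 ≤ packingConst C a b := by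
  unfold packingConst
  positivity

theorem exists_nat_pos_le_le_add_one {x : ℝ} (hx : 0 ≤ x) :
    ∃ n : ℕ, 0 < n ∧ x ≤ n ∧ (n : ℝ) ≤ x + 1 := by
  refine ⟨⌊x⌋₊ + 1, Nat.succ_pos _, ?_, ?_⟩ <;> push_cast
  · exact (Nat.lt_floor_add_one x).le
  · linarith [Nat.floor_le hx]

theorem HasTraceBound.card_mul_pow_le_of_le {Y : Finset α} {𝒯 : Finset (Finset α)} {C δ : ℝ}
    {a b k : ℕ} (h : HasTraceBound Y 𝒯 C a b) (hYne : Y.Nonempty) (hY : ∀ T ∈ 𝒯, T ⊆ Y)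
    (hk : ∀ T ∈ 𝒯, #T ≤ k) (hpos : 0 < k) (hδ : 0 ≤ δ) (hδv : δ ≤ 4 * vcBound C (a + b) + 1) :
    #𝒯 * δ ^ (a + b) ≤ packingConst C a b * (#Y : ℝ) ^ a * (k : ℝ) ^ b := by
  have hC : 0 ≤ C := h.nonneg hYne
  have : (0 : ℝ) ≤ vcBound C (a + b) := Nat.cast_nonneg _
  calc #𝒯 * δ ^ (a + b)
      ≤ C * (#Y : ℝ) ^ a * (k : ℝ) ^ b * (16 * vcBound C (a + b) + 5) ^ (a + b) := by
        gcongr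
        · exact h.card_le hYne hY hpos hk
        · linarith
    _ ≤ 4 * (C * (#Y : ℝ) ^ a * (k : ℝ) ^ b * (16 * vcBound C (a + b) + 5) ^ (a + b)) :=
        le_mul_of_one_le_left (by positivity) (by norm_num)
    _ = packingConst C a b * (#Y : ℝ) ^ a * (k : ℝ) ^ b := by
        rw [packingConst]
        ring

theorem HasTraceBound.card_mul_pow_le_of_ge {Y : Finset α} {𝒯 : Finset (Finset α)} {C δ : ℝ}
    {a b k : ℕ} (h : HasTraceBound Y 𝒯 C a b) (hsep : IsSeparatedFamily δ 𝒯)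
    (hY : ∀ T ∈ 𝒯, T ⊆ Y) (hk : ∀ T ∈ 𝒯, #T ≤ k) (hδk : δ ≤ k) (hδY : δ ≤ #Y)
    (hδv : 4 * vcBound C (a + b) + 1 ≤ δ) :
    #𝒯 * δ ^ (a + b) ≤ packingConst C a b * (#Y : ℝ) ^ a * (k : ℝ) ^ b := by
  have hδ : 0 < δ := lt_of_lt_of_le (by positivity) hδv
  have hYpos : (0 : ℝ) < #Y := hδ.trans_le hδY
  have hYδ : 1 ≤ #Y / δ := (one_le_div hδ).2 hδY
  have hkδ : 1 ≤ k / δ := (one_le_div hδ).2 hδk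
  have hC : 0 ≤ C := h.nonneg (card_pos.1 (Nat.cast_pos.1 hYpos))
  obtain ⟨v, hv⟩ : ∃ v : ℝ, v = vcBound C (a + b) := ⟨_, rfl⟩
  have hv0 : 0 ≤ v := hv ▸ Nat.cast_nonneg _
  obtain ⟨t, ht, htl, htu⟩ := exists_nat_pos_le_le_add_one (x := 4 * #Y * v / δ) (by positivity)
  obtain ⟨κ, hκ, hκl, hκu⟩ := exists_nat_pos_le_le_add_one (x := 4 * k * t / (#Y : ℝ))
    (by positivity)
  have htu' : (t : ℝ) ≤ (4 * v + 1) * (#Y / δ) := by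
    linarith [show 4 * #Y * v / δ = 4 * v * (#Y / δ) by ring]
  have htY : t ≤ #Y := by
    have : (t : ℝ) ≤ δ * (#Y / δ) := htu'.trans (by gcongr; exact hv ▸ hδv)
    exact_mod_cast this.trans_eq (mul_div_cancel₀ _ hδ.ne')
  have hκu' : (κ : ℝ) ≤ (16 * v + 5) * (k / δ) := by
    have : 4 * k * t / (#Y : ℝ) ≤ 4 * (4 * v + 1) * (k / δ) := by
      rw [div_le_iff₀ hYpos]
      calc 4 * (k : ℝ) * t ≤ 4 * k * ((4 * v + 1) * (#Y / δ)) := by gcongr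
        _ = 4 * (4 * v + 1) * (k / δ) * #Y := by ring
    linarith
  have hcard : (#𝒯 : ℝ) ≤ 4 * (C * (t : ℝ) ^ a * (κ : ℝ) ^ b) :=
    card_le_of_isSeparatedFamily_of_hasTraceBound h hsep hY hk hδ hκ ht htY
      (by rwa [div_le_iff₀ hδ, mul_comm _ δ, hv] at htl)
      (by rwa [div_le_iff₀ hYpos, mul_comm _ (#Y : ℝ)] at hκl)
  calc #𝒯 * δ ^ (a + b) ≤ 4 * (C * (t : ℝ) ^ a * (κ : ℝ) ^ b) * δ ^ (a + b) := by gcongr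
    _ ≤ 4 * (C * ((16 * v + 5) * (#Y / δ)) ^ a * ((16 * v + 5) * (k / δ)) ^ b) *
          δ ^ (a + b) := by
        gcongr
        exact htu'.trans (by gcongr <;> linarith)
    _ = packingConst C a b * (#Y : ℝ) ^ a * (k : ℝ) ^ b := by
        rw [packingConst, ← hv, mul_pow, mul_pow, div_pow, div_pow, pow_add, pow_add]
        field_simp

theorem HasTraceBound.card_mul_pow_le {Y : Finset α} {𝒯 : Finset (Finset α)} {C δ : ℝ}
    {a b k : ℕ} (h : HasTraceBound Y 𝒯 C a b) (hsep : IsSeparatedFamily δ 𝒯)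
    (hY : ∀ T ∈ 𝒯, T ⊆ Y) (hk : ∀ T ∈ 𝒯, #T ≤ k) (hδ : 0 < δ) (hδk : δ ≤ k) (hδY : δ ≤ #Y) :
    #𝒯 * δ ^ (a + b) ≤ packingConst C a b * (#Y : ℝ) ^ a * (k : ℝ) ^ b := by
  rcases le_total δ (4 * vcBound C (a + b) + 1) with hδv | hδv
  · exact h.card_mul_pow_le_of_le (card_pos.1 (Nat.cast_pos.1 (hδ.trans_le hδY))) hY hk
      (Nat.cast_pos.1 (hδ.trans_le hδk)) hδ.le hδv
  · exact h.card_mul_pow_le_of_ge hsep hY hk hδk hδY hδv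

end Traces

section PartialColoring

variable {α : Type*}

theorem card_filter_card_le_le (Y : Finset α) (q : ℕ) {z : ℝ} (hz : 1 ≤ z) :
    (#{D ∈ Y.powerset | #D ≤ q} : ℝ) ≤ z ^ q * (1 + z⁻¹) ^ #Y := by
  have : 0 < z := one_pos.trans_le hz
  calc (#{D ∈ Y.powerset | #D ≤ q} : ℝ)
      = ∑ D ∈ Y.powerset with #D ≤ q, (1 : ℝ) := by rw [sum_const, nsmul_one]
    _ ≤ ∑ D ∈ Y.powerset with #D ≤ q, z ^ q * z⁻¹ ^ #D := sum_le_sum fun D hD => by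
        rw [inv_pow, ← div_eq_mul_inv, one_le_div (by positivity)]
        exact pow_le_pow_right₀ hz (mem_filter.1 hD).2
    _ ≤ ∑ D ∈ Y.powerset, z ^ q * z⁻¹ ^ #D :=
        sum_le_sum_of_subset_of_nonneg (filter_subset _ _) fun _ _ _ => by positivity
    _ = z ^ q * (1 + z⁻¹) ^ #Y := by
        rw [← mul_sum, add_comm, ← sum_pow_mul_eq_add_pow]
        simp only [one_pow, mul_one]

theorem two_mul_two_pow_mul_card_filter_card_le_lt {Y : Finset α} {q : ℕ} (hq : 0 < q)
    (hqY : 10 * q ≤ #Y) :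
    2 * (2 : ℝ) ^ q * #{D ∈ Y.powerset | #D ≤ q} < 2 ^ #Y := by
  have hbase : 2 * (2 : ℝ) ^ q * 8 ^ q < (16 / 9) ^ #Y :=
    calc 2 * (2 : ℝ) ^ q * 8 ^ q = 2 ^ (4 * q + 1) := by
          rw [pow_succ, pow_mul, mul_assoc, ← mul_pow, mul_comm]
          norm_num
      _ < 2 ^ (8 * q) := pow_lt_pow_right₀ one_lt_two (by lia)
      _ = (2 ^ 8) ^ q := pow_mul _ _ _
      _ ≤ ((16 / 9) ^ 10) ^ q := by gcongr; norm_num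
      _ = (16 / 9) ^ (10 * q) := (pow_mul _ _ _).symm
      _ ≤ (16 / 9) ^ #Y := pow_le_pow_right₀ (by norm_num) hqY
  calc 2 * (2 : ℝ) ^ q * #{D ∈ Y.powerset | #D ≤ q}
      ≤ 2 * 2 ^ q * (8 ^ q * (1 + 8⁻¹) ^ #Y) := by
        gcongr
        exact card_filter_card_le_le Y q (by norm_num)
    _ = 2 * 2 ^ q * 8 ^ q * (1 + 8⁻¹) ^ #Y := by ring
    _ < (16 / 9) ^ #Y * (1 + 8⁻¹) ^ #Y := by gcongr
    _ = 2 ^ #Y := by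
        rw [← mul_pow]
        norm_num

variable [DecidableEq α]

/-- The value at `x` of the coloring that is `1` on `B` and `-1` elsewhere. -/
def colorSign (B : Finset α) (x : α) : ℝ :=
  if x ∈ B then 1 else -1

/-- The sum over `T` of the coloring that is `1` on `B` and `-1` elsewhere. -/
def imbalance (B T : Finset α) : ℝ :=
  ∑ x ∈ T, colorSign B x

theorem sum_powerset_exp_sum_mul_colorSign_le (Y : Finset α) (a : α → ℝ) :
    ∑ B ∈ Y.powerset, Real.exp (∑ x ∈ Y, a x * colorSign B x) ≤
      2 ^ #Y * Real.exp ((∑ x ∈ Y, a x ^ 2) / 2) := by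
  have hfactor : ∀ B ∈ Y.powerset, Real.exp (∑ x ∈ Y, a x * colorSign B x) =
      (∏ x ∈ B, Real.exp (a x)) * ∏ x ∈ Y \ B, Real.exp (-a x) := fun B hB => by
    rw [Real.exp_sum, ← prod_sdiff (mem_powerset.1 hB), mul_comm]
    congr 1
    · exact prod_congr rfl fun x hx => by rw [colorSign, if_pos hx, mul_one]
    · exact prod_congr rfl fun x hx => by
        rw [colorSign, if_neg (mem_sdiff.1 hx).2, mul_neg_one]
  calc ∑ B ∈ Y.powerset, Real.exp (∑ x ∈ Y, a x * colorSign B x)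
      = ∏ x ∈ Y, (Real.exp (a x) + Real.exp (-a x)) := by
        rw [sum_congr rfl hfactor, ← prod_add]
    _ = ∏ x ∈ Y, 2 * Real.cosh (a x) :=
        prod_congr rfl fun x _ => by rw [Real.cosh_eq]; ring
    _ ≤ ∏ x ∈ Y, 2 * Real.exp (a x ^ 2 / 2) :=
        prod_le_prod (fun x _ => by positivity) fun x _ => by
          gcongr; exact Real.cosh_le_exp_half_sq (a x)
    _ = 2 ^ #Y * Real.exp ((∑ x ∈ Y, a x ^ 2) / 2) := by
        rw [prod_mul_distrib, prod_const, sum_div, Real.exp_sum]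

theorem card_filter_lt_sum_mul_colorSign_le (Y : Finset α) (a : α → ℝ) {Λ : ℝ} (hΛ : 0 ≤ Λ) :
    (#{B ∈ Y.powerset | √(Λ * ∑ x ∈ Y, a x ^ 2) < ∑ x ∈ Y, a x * colorSign B x} : ℝ) ≤
      2 ^ #Y * Real.exp (-Λ / 2) := by
  set D := ∑ x ∈ Y, a x ^ 2 with hD
  set r := √(Λ * D)
  have hD0 : 0 ≤ D := sum_nonneg fun x _ => sq_nonneg (a x)
  have hr : r ^ 2 = Λ * D := Real.sq_sqrt (by positivity)
  obtain hzero | hpos := hD0.eq_or_lt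
  · have ha : ∀ x ∈ Y, a x = 0 := fun x hx => pow_eq_zero_iff two_ne_zero |>.1
      ((sum_eq_zero_iff_of_nonneg fun x _ => sq_nonneg (a x)).1 (hD ▸ hzero.symm) x hx)
    have hempty : {B ∈ Y.powerset | r < ∑ x ∈ Y, a x * colorSign B x} = ∅ := by
      refine filter_eq_empty_iff.2 fun B _ => not_lt.2 ?_
      rw [sum_eq_zero fun x hx => by rw [ha x hx, zero_mul]]
      exact Real.sqrt_nonneg _
    rw [hempty, card_empty, Nat.cast_zero]
    positivity
  have hmgf := sum_powerset_exp_sum_mul_colorSign_le Y fun x => r / D * a x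
  have hvar : ∑ x ∈ Y, (r / D * a x) ^ 2 = Λ := by
    simp_rw [mul_pow]
    rw [← mul_sum, ← hD, div_pow, hr]
    field_simp
  have hmarkov : #{B ∈ Y.powerset | r < ∑ x ∈ Y, a x * colorSign B x} * Real.exp Λ ≤
      ∑ B ∈ Y.powerset, Real.exp (∑ x ∈ Y, r / D * a x * colorSign B x) := by
    rw [← nsmul_eq_mul]
    refine (card_nsmul_le_sum _ _ _ fun B hB => Real.exp_le_exp.2 ?_).trans
      (sum_le_sum_of_subset_of_nonneg (filter_subset _ _) fun _ _ _ => (Real.exp_pos _).le)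
    simp_rw [mul_assoc]
    rw [← mul_sum]
    calc Λ = r / D * r := by rw [div_mul_eq_mul_div, ← sq, hr, mul_div_cancel_right₀ _ hpos.ne']
      _ ≤ r / D * ∑ x ∈ Y, a x * colorSign B x := by
          gcongr
          exact (mem_filter.1 hB).2.le
  rw [hvar] at hmgf
  calc (#{B ∈ Y.powerset | r < ∑ x ∈ Y, a x * colorSign B x} : ℝ)
      ≤ 2 ^ #Y * Real.exp (Λ / 2) / Real.exp Λ :=
        (le_div_iff₀ (Real.exp_pos Λ)).2 (hmarkov.trans hmgf)
    _ = 2 ^ #Y * Real.exp (-Λ / 2) := by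
        rw [mul_div_assoc, ← Real.exp_sub]
        ring_nf

theorem card_filter_lt_abs_sum_mul_colorSign_le (Y : Finset α) (a : α → ℝ) {Λ : ℝ} (hΛ : 0 ≤ Λ) :
    (#{B ∈ Y.powerset | √(Λ * ∑ x ∈ Y, a x ^ 2) < |∑ x ∈ Y, a x * colorSign B x|} : ℝ) ≤
      2 ^ #Y * (2 * Real.exp (-Λ / 2)) := by
  have hupper := card_filter_lt_sum_mul_colorSign_le Y a hΛ
  have hlower := card_filter_lt_sum_mul_colorSign_le Y (fun x => -a x) hΛ
  simp only [neg_sq, neg_mul, sum_neg_distrib] at hlower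
  simp_rw [lt_abs, filter_or]
  calc (#({B ∈ Y.powerset | √(Λ * ∑ x ∈ Y, a x ^ 2) < ∑ x ∈ Y, a x * colorSign B x} ∪
        {B ∈ Y.powerset | √(Λ * ∑ x ∈ Y, a x ^ 2) < -∑ x ∈ Y, a x * colorSign B x}) : ℝ)
      ≤ #{B ∈ Y.powerset | √(Λ * ∑ x ∈ Y, a x ^ 2) < ∑ x ∈ Y, a x * colorSign B x} +
        #{B ∈ Y.powerset | √(Λ * ∑ x ∈ Y, a x ^ 2) < -∑ x ∈ Y, a x * colorSign B x} :=
        mod_cast card_union_le _ _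
    _ ≤ 2 ^ #Y * (2 * Real.exp (-Λ / 2)) := by linarith

theorem imbalance_sub_imbalance {S T Y : Finset α} (hS : S ⊆ Y) (hT : T ⊆ Y) (B : Finset α) :
    imbalance B S - imbalance B T =
      ∑ x ∈ Y, ((if x ∈ S then 1 else 0) - (if x ∈ T then 1 else 0)) * colorSign B x := by
  simp only [imbalance, sub_mul, sum_sub_distrib, ite_mul, one_mul, zero_mul, ← sum_filter,
    filter_mem_eq_inter, inter_eq_right.2 hS, inter_eq_right.2 hT]

theorem sum_sq_indicator_sub_indicator {S T Y : Finset α} (hS : S ⊆ Y) (hT : T ⊆ Y) :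
    ∑ x ∈ Y, ((if x ∈ S then 1 else 0) - (if x ∈ T then 1 else 0) : ℝ) ^ 2 = #(S ∆ T) := by
  have hsq : ∀ x, ((if x ∈ S then 1 else 0) - (if x ∈ T then 1 else 0) : ℝ) ^ 2 =
      if x ∈ S ∆ T then 1 else 0 := fun x => by
    by_cases hxS : x ∈ S <;> by_cases hxT : x ∈ T <;> simp [mem_symmDiff, hxS, hxT]
  have hsub : S ∆ T ⊆ Y := fun x hx =>
    (mem_symmDiff.1 hx).elim (fun h => hS h.1) fun h => hT h.1
  rw [sum_congr rfl fun x _ => hsq x, sum_boole, filter_mem_eq_inter, inter_eq_right.2 hsub]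

theorem card_filter_lt_abs_imbalance_sub_le {S T Y : Finset α} (hS : S ⊆ Y) (hT : T ⊆ Y) {Λ : ℝ}
    (hΛ : 0 ≤ Λ) :
    (#{B ∈ Y.powerset | √(Λ * #(S ∆ T)) < |imbalance B S - imbalance B T|} : ℝ) ≤
      2 ^ #Y * (2 * Real.exp (-Λ / 2)) := by
  simp_rw [imbalance_sub_imbalance hS hT, ← sum_sq_indicator_sub_indicator hS hT]
  exact card_filter_lt_abs_sum_mul_colorSign_le Y _ hΛ

/-- The colorings of `Y`, given by their positive classes, whose values on any two members of
`𝒯` differ by at most the deviation `√(Λ * #(S ∆ T))` expected of a random coloring. -/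
noncomputable def balancedSubsets (Y : Finset α) (𝒯 : Finset (Finset α)) (Λ : ℝ) :
    Finset (Finset α) :=
  {B ∈ Y.powerset | ∀ S ∈ 𝒯, ∀ T ∈ 𝒯, |imbalance B S - imbalance B T| ≤ √(Λ * #(S ∆ T))}

theorem mem_balancedSubsets {Y B : Finset α} {𝒯 : Finset (Finset α)} {Λ : ℝ} :
    B ∈ balancedSubsets Y 𝒯 Λ ↔ B ⊆ Y ∧
      ∀ S ∈ 𝒯, ∀ T ∈ 𝒯, |imbalance B S - imbalance B T| ≤ √(Λ * #(S ∆ T)) := by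
  rw [balancedSubsets, mem_filter, mem_powerset]

theorem two_pow_card_le_two_mul_card_balancedSubsets {Y : Finset α} {𝒯 : Finset (Finset α)}
    {Λ : ℝ} (hΛ : 0 ≤ Λ) (hY : ∀ T ∈ 𝒯, T ⊆ Y)
    (hcard : (#𝒯 : ℝ) ^ 2 * (2 * Real.exp (-Λ / 2)) ≤ 1 / 2) :
    (2 : ℝ) ^ #Y ≤ 2 * #(balancedSubsets Y 𝒯 Λ) := by
  set bad : Finset α × Finset α → Finset (Finset α) := fun p =>
    {B ∈ Y.powerset | √(Λ * #(p.1 ∆ p.2)) < |imbalance B p.1 - imbalance B p.2|}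
  have hcover : Y.powerset ⊆ balancedSubsets Y 𝒯 Λ ∪ (𝒯 ×ˢ 𝒯).biUnion bad := fun B hB => by
    by_contra hB'
    simp only [mem_union, mem_balancedSubsets, mem_biUnion, mem_product, not_or, not_exists,
      bad, mem_filter, hB, mem_powerset.1 hB, true_and, not_and, not_lt] at hB'
    exact hB'.1 fun S hS T hT => hB'.2 (S, T) ⟨hS, hT⟩
  have hbad : ∑ p ∈ 𝒯 ×ˢ 𝒯, (#(bad p) : ℝ) ≤ 2 ^ #Y / 2 :=
    calc ∑ p ∈ 𝒯 ×ˢ 𝒯, (#(bad p) : ℝ)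
        ≤ ∑ _p ∈ 𝒯 ×ˢ 𝒯, (2 : ℝ) ^ #Y * (2 * Real.exp (-Λ / 2)) :=
          sum_le_sum fun p hp => card_filter_lt_abs_imbalance_sub_le
            (hY _ (mem_product.1 hp).1) (hY _ (mem_product.1 hp).2) hΛ
      _ = 2 ^ #Y * ((#𝒯 : ℝ) ^ 2 * (2 * Real.exp (-Λ / 2))) := by
          rw [sum_const, card_product, nsmul_eq_mul]
          push_cast
          ring
      _ ≤ 2 ^ #Y * (1 / 2) := by gcongr
      _ = 2 ^ #Y / 2 := mul_one_div _ _
  have hsum : (2 : ℝ) ^ #Y ≤ #(balancedSubsets Y 𝒯 Λ) + ∑ p ∈ 𝒯 ×ˢ 𝒯, (#(bad p) : ℝ) := by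
    have h := (card_le_card hcover).trans
      ((card_union_le _ _).trans (Nat.add_le_add_left card_biUnion_le _))
    rw [card_powerset] at h
    exact_mod_cast h
  linarith

theorem exists_eq_and_lt_card_symmDiff {β : Type*} {Y : Finset α}
    {𝒢 : Finset (Finset α)} {Z : Finset β} {q : ℕ} {f : Finset α → β} (hY : ∀ B ∈ 𝒢, B ⊆ Y)
    (hf : ∀ B ∈ 𝒢, f B ∈ Z) (hcard : #Z * #{D ∈ Y.powerset | #D ≤ q} < #𝒢) :
    ∃ B₁ ∈ 𝒢, ∃ B₀ ∈ 𝒢, f B₁ = f B₀ ∧ q < #(B₁ ∆ B₀) := by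
  classical
  obtain ⟨z, -, hz⟩ := exists_lt_card_fiber_of_mul_lt_card_of_maps_to hf hcard
  obtain ⟨B₀, hB₀⟩ := card_pos.1 (Nat.zero_lt_of_lt hz)
  obtain ⟨hB₀𝒢, rfl⟩ := mem_filter.1 hB₀
  by_contra! hclose
  refine hz.not_ge (card_le_card_of_injOn (· ∆ B₀) (fun B hB => ?_)
    (symmDiff_left_injective B₀).injOn)
  obtain ⟨hB𝒢, hfB⟩ := mem_filter.1 hB
  exact mem_coe.2 (mem_filter.2 ⟨mem_powerset.2 (symmDiff_le_sup.trans
    (union_subset (hY B hB𝒢) (hY B₀ hB₀𝒢))), hclose B hB𝒢 B₀ hB₀𝒢 hfB⟩)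

/-- The partial coloring obtained from the colorings that are `1` on `B₁` and on `B₀`,
respectively, and `-1` elsewhere: half their difference, which vanishes where they agree. -/
def halfDifference (B₁ B₀ : Finset α) (x : α) : ℤ :=
  (if x ∈ B₁ then 1 else 0) - (if x ∈ B₀ then 1 else 0)

theorem abs_halfDifference_le_one (B₁ B₀ : Finset α) (x : α) : |halfDifference B₁ B₀ x| ≤ 1 := by
  unfold halfDifference
  split_ifs <;> norm_num

theorem halfDifference_ne_zero_iff {B₁ B₀ : Finset α} {x : α} :
    halfDifference B₁ B₀ x ≠ 0 ↔ x ∈ B₁ ∆ B₀ := by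
  by_cases h₁ : x ∈ B₁ <;> by_cases h₀ : x ∈ B₀ <;>
    simp [halfDifference, mem_symmDiff, h₁, h₀]

theorem sum_halfDifference (B₁ B₀ T : Finset α) :
    ∑ x ∈ T, (halfDifference B₁ B₀ x : ℝ) = (imbalance B₁ T - imbalance B₀ T) / 2 := by
  have hcolor : ∀ x, (halfDifference B₁ B₀ x : ℝ) = (colorSign B₁ x - colorSign B₀ x) / 2 :=
    fun x => by
      unfold halfDifference colorSign
      split_ifs <;> norm_num
  rw [sum_congr rfl fun x _ => hcolor x, ← sum_div, sum_sub_distrib, imbalance, imbalance]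

theorem filter_halfDifference_ne_zero {Y B₁ B₀ : Finset α} (h₁ : B₁ ⊆ Y) (h₀ : B₀ ⊆ Y) :
    {x ∈ Y | halfDifference B₁ B₀ x ≠ 0} = B₁ ∆ B₀ := by
  simp_rw [halfDifference_ne_zero_iff, filter_mem_eq_inter]
  exact inter_eq_right.2 (symmDiff_le_sup.trans (union_subset h₁ h₀))

/-- The deviation between `S` and `T` of the coloring with positive class `B`, rounded to a
multiple of `2 * Δ`. The shift makes the code of a balanced subset nonnegative. -/
noncomputable def deviationCode (Λ Δ : ℝ) (S T B : Finset α) : ℤ :=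
  ⌊(imbalance B S - imbalance B T + √(Λ * #(S ∆ T))) / (2 * Δ)⌋

theorem deviationCode_mem_Ico {Λ Δ : ℝ} {S T B : Finset α} {m : ℕ}
    (hB : |imbalance B S - imbalance B T| ≤ √(Λ * #(S ∆ T)))
    (hΔ : √(Λ * #(S ∆ T)) < 2 ^ m * Δ) : deviationCode Λ Δ S T B ∈ Ico (0 : ℤ) (2 ^ m) := by
  have hpos : 0 < Δ := pos_of_mul_pos_right ((Real.sqrt_nonneg _).trans_lt hΔ) (by positivity)
  obtain ⟨hlower, hupper⟩ := abs_le.1 hB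
  refine mem_Ico.2 ⟨Int.floor_nonneg.2 (div_nonneg (by linarith) (by positivity)),
    Int.floor_lt.2 ((div_lt_iff₀ (by positivity)).2 ?_)⟩
  push_cast
  linarith

theorem abs_sub_le_of_deviationCode_eq {Λ Δ : ℝ} {S T B₁ B₀ : Finset α} (hΔ : 0 < Δ)
    (h : deviationCode Λ Δ S T B₁ = deviationCode Λ Δ S T B₀) :
    |(imbalance B₁ S - imbalance B₁ T) - (imbalance B₀ S - imbalance B₀ T)| ≤ 2 * Δ := by
  have hlt := Int.abs_sub_lt_one_of_floor_eq_floor h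
  rw [← sub_div, add_sub_add_right_eq_sub, abs_div, abs_of_pos (by positivity : 0 < 2 * Δ),
    div_lt_one (by positivity)] at hlt
  exact hlt.le

theorem abs_sum_halfDifference_sub_le {B₁ B₀ S T : Finset α} {R : ℝ}
    (h : |(imbalance B₁ S - imbalance B₁ T) - (imbalance B₀ S - imbalance B₀ T)| ≤ 2 * R) :
    |∑ x ∈ S, (halfDifference B₁ B₀ x : ℝ) - ∑ x ∈ T, (halfDifference B₁ B₀ x : ℝ)| ≤ R := by
  rw [sum_halfDifference, sum_halfDifference, ← sub_div, sub_sub_sub_comm, abs_div, abs_two]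
  linarith

theorem exists_partial_coloring {ι : Type*} [Fintype ι] {Y : Finset α} {𝒯 : Finset (Finset α)}
    {Λ : ℝ} (hΛ : 0 ≤ Λ) (hY : ∀ T ∈ 𝒯, T ⊆ Y)
    (hcard : (#𝒯 : ℝ) ^ 2 * (2 * Real.exp (-Λ / 2)) ≤ 1 / 2) {F F' : ι → Finset α}
    (hF : ∀ i, F i ∈ 𝒯) (hF' : ∀ i, F' i ∈ 𝒯) {Δ : ι → ℝ} {bits : ι → ℕ}
    (hbits : ∀ i, √(Λ * #(F i ∆ F' i)) < 2 ^ bits i * Δ i) {q : ℕ} (hq : 0 < q)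
    (hqY : 10 * q ≤ #Y) (hsum : ∑ i, bits i ≤ q) :
    ∃ χ : α → ℤ, (∀ x, |χ x| ≤ 1) ∧ q < #{x ∈ Y | χ x ≠ 0} ∧
      (∀ S ∈ 𝒯, ∀ T ∈ 𝒯, |∑ x ∈ S, (χ x : ℝ) - ∑ x ∈ T, (χ x : ℝ)| ≤ √(Λ * #(S ∆ T))) ∧
      ∀ i, |∑ x ∈ F i, (χ x : ℝ) - ∑ x ∈ F' i, (χ x : ℝ)| ≤ Δ i := by
  classical
  have hΔ : ∀ i, 0 < Δ i := fun i =>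
    pos_of_mul_pos_right ((Real.sqrt_nonneg _).trans_lt (hbits i)) (by positivity)
  set code : Finset α → ι → ℤ := fun B i => deviationCode Λ (Δ i) (F i) (F' i) B
  have hmaps : ∀ B ∈ balancedSubsets Y 𝒯 Λ,
      code B ∈ Fintype.piFinset fun i => Ico (0 : ℤ) (2 ^ bits i) := fun B hB =>
    Fintype.mem_piFinset.2 fun i =>
      deviationCode_mem_Ico ((mem_balancedSubsets.1 hB).2 _ (hF i) _ (hF' i)) (hbits i)
  have hcount : #(Fintype.piFinset fun i => Ico (0 : ℤ) (2 ^ bits i)) *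
      #{D ∈ Y.powerset | #D ≤ q} < #(balancedSubsets Y 𝒯 Λ) := by
    have hcodes : #(Fintype.piFinset fun i => Ico (0 : ℤ) (2 ^ bits i)) ≤ 2 ^ q := by
      simp only [Fintype.card_piFinset, Int.card_Ico, sub_zero, Int.toNat_pow_of_nonneg zero_le_two,
        Int.reduceToNat, prod_pow_eq_pow_sum]
      exact Nat.pow_le_pow_right two_pos hsum
    have hball := two_mul_two_pow_mul_card_filter_card_le_lt hq hqY
    have hmany := two_pow_card_le_two_mul_card_balancedSubsets hΛ hY hcard
    refine (Nat.mul_le_mul_right _ hcodes).trans_lt (Nat.cast_lt (α := ℝ).1 ?_)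
    push_cast
    linarith
  obtain ⟨B₁, hB₁, B₀, hB₀, heq, hfar⟩ := exists_eq_and_lt_card_symmDiff
    (fun B hB => (mem_balancedSubsets.1 hB).1) hmaps hcount
  obtain ⟨hB₁Y, hB₁dev⟩ := mem_balancedSubsets.1 hB₁
  obtain ⟨hB₀Y, hB₀dev⟩ := mem_balancedSubsets.1 hB₀
  refine ⟨halfDifference B₁ B₀, abs_halfDifference_le_one B₁ B₀, ?_, fun S hS T hT => ?_,
    fun i => ?_⟩
  · rwa [filter_halfDifference_ne_zero hB₁Y hB₀Y]
  · refine abs_sum_halfDifference_sub_le ((abs_sub _ _).trans ?_)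
    linarith [hB₁dev S hS T hT, hB₀dev S hS T hT]
  · exact abs_sum_halfDifference_sub_le
      (abs_sub_le_of_deviationCode_eq (hΔ i) (congrFun heq i))

end PartialColoring

section Chaining

variable {α : Type*} [DecidableEq α]

/-- A `δ`-net of `𝒢` for the distance `#(S ∆ T)`. The empty set always counts as a net point, so
that radii exceeding the sizes of all sets need no points. -/
structure IsNet (N 𝒢 : Finset (Finset α)) (δ : ℝ) : Prop where
  subset : N ⊆ 𝒢
  exists_card_symmDiff_le : ∀ T ∈ 𝒢, ∃ P ∈ insert ∅ N, #(T ∆ P) ≤ δ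

theorem exists_isSeparatedFamily_forall_card_symmDiff_le (𝒢 : Finset (Finset α)) {δ : ℝ}
    (hδ : 0 ≤ δ) :
    ∃ N ⊆ 𝒢, IsSeparatedFamily δ N ∧ ∀ T ∈ 𝒢, ∃ P ∈ N, #(T ∆ P) ≤ δ := by
  classical
  obtain ⟨N, hN, hmax⟩ := exists_max_image {N ∈ 𝒢.powerset | IsSeparatedFamily δ N} card
    ⟨∅, mem_filter.2 ⟨empty_mem_powerset 𝒢, by simp [IsSeparatedFamily]⟩⟩
  obtain ⟨hN𝒢, hsep⟩ := mem_filter.1 hN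
  rw [mem_powerset] at hN𝒢
  refine ⟨N, hN𝒢, hsep, fun T hT => ?_⟩
  by_contra! hfar
  have hTN : T ∉ N := fun h => (hfar T h).not_ge (by simpa using hδ)
  have hinsert : IsSeparatedFamily δ (insert T N) := by
    rw [IsSeparatedFamily, coe_insert]
    exact hsep.insert fun P hP _ =>
      ⟨(hfar P hP).le, by rw [symmDiff_comm]; exact (hfar P hP).le⟩
  have hle := hmax _ (mem_filter.2 ⟨mem_powerset.2 (insert_subset hT hN𝒢), hinsert⟩)
  rw [card_insert_of_notMem hTN] at hle
  exact Nat.not_succ_le_self _ hle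

theorem HasTraceBound.exists_isNet {Y : Finset α} {𝒢 : Finset (Finset α)} {C δ : ℝ} {a b k : ℕ}
    (h : HasTraceBound Y 𝒢 C a b) (hYne : Y.Nonempty) (hY : ∀ T ∈ 𝒢, T ⊆ Y)
    (hk : ∀ T ∈ 𝒢, #T ≤ k) (hδ : 0 < δ) :
    ∃ N, IsNet N 𝒢 δ ∧ #N * δ ^ (a + b) ≤ packingConst C a b * (#Y : ℝ) ^ a * (k : ℝ) ^ b := by
  by_cases hlarge : δ ≤ k ∧ δ ≤ #Y
  · obtain ⟨N, hN, hsep, hcover⟩ := exists_isSeparatedFamily_forall_card_symmDiff_le 𝒢 hδ.le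
    refine ⟨N, ⟨hN, fun T hT => ?_⟩, (h.mono Subset.rfl hN).card_mul_pow_le hsep
      (fun T hT => hY T (hN hT)) (fun T hT => hk T (hN hT)) hδ hlarge.1 hlarge.2⟩
    obtain ⟨P, hP, hTP⟩ := hcover T hT
    exact ⟨P, mem_insert_of_mem hP, hTP⟩
  · refine ⟨∅, ⟨empty_subset 𝒢, fun T hT => ⟨∅, mem_insert_self _ _, ?_⟩⟩, ?_⟩
    · rw [← bot_eq_empty, symmDiff_bot]
      have hTk : (#T : ℝ) ≤ k := mod_cast hk T hT
      have hTY : (#T : ℝ) ≤ #Y := mod_cast card_le_card (hY T hT)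
      by_contra! hδT
      exact hlarge ⟨(hδT.trans_le hTk).le, (hδT.trans_le hTY).le⟩
    · have := packingConst_nonneg (h.nonneg hYne) a b
      rw [card_empty, Nat.cast_zero, zero_mul]
      positivity

theorem abs_le_of_forall_exists_abs_sub_le {β : Type*} {N : ℕ → Finset β} {s : β → ℝ} {σ : ℝ}
    {J : ℕ} (hJ : ∀ T ∈ N J, s T = 0) (hσ : 0 ≤ σ)
    (hlink : ∀ j < J, ∀ T ∈ N j, ∃ P ∈ N (j + 1), |s T - s P| ≤ σ / 2 ^ j) {j : ℕ} (hj : j ≤ J)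
    {T : β} (hT : T ∈ N j) : |s T| ≤ 2 * σ / 2 ^ j := by
  induction hj using Nat.decreasingInduction generalizing T with
  | self =>
    rw [hJ T hT, abs_zero]
    positivity
  | of_succ j hj ih =>
    obtain ⟨P, hP, hTP⟩ := hlink j hj T hT
    calc |s T| ≤ |s T - s P| + |s P| := by simpa using abs_add_le (s T - s P) (s P)
      _ ≤ σ / 2 ^ j + 2 * σ / 2 ^ (j + 1) := add_le_add hTP (ih hP)
      _ = 2 * σ / 2 ^ j := by rw [pow_succ]; field_simp; norm_num

theorem sqrt_mul_lt_two_pow_mul_div {Λ δ m : ℝ} {j : ℕ} (hΛ : 0 < Λ) (hδ : 0 < δ)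
    (hm : m ≤ 2 ^ (j + 1) * δ) : √(Λ * m) < 2 ^ (2 * j + 2) * (√(Λ * δ) / 2 ^ j) := by
  have : 0 < √(Λ * δ) := Real.sqrt_pos.2 (mul_pos hΛ hδ)
  calc √(Λ * m) ≤ √((2 ^ (j + 1)) ^ 2 * (Λ * δ)) := by
        refine Real.sqrt_le_sqrt ?_
        calc Λ * m ≤ Λ * (2 ^ (j + 1) * δ) := by gcongr
          _ ≤ Λ * ((2 ^ (j + 1)) ^ 2 * δ) := by
              gcongr
              exact le_self_pow₀ (one_le_pow₀ one_le_two) two_ne_zero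
          _ = (2 ^ (j + 1)) ^ 2 * (Λ * δ) := by ring
    _ = 2 ^ (j + 1) * √(Λ * δ) := by
        rw [Real.sqrt_mul (by positivity), Real.sqrt_sq (by positivity)]
    _ < 2 ^ (j + 2) * √(Λ * δ) := by gcongr <;> norm_num
    _ = 2 ^ (2 * j + 2) * (√(Λ * δ) / 2 ^ j) := by
        field_simp
        ring

theorem exists_partial_coloring_of_isNet {κ : Type*} [Fintype κ] {Y : Finset α}
    {𝒯 : Finset (Finset α)} {Λ : ℝ} (hΛ : 0 < Λ) (hY : ∀ T ∈ 𝒯, T ⊆ Y)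
    (hcard : (#𝒯 : ℝ) ^ 2 * (2 * Real.exp (-Λ / 2)) ≤ 1 / 2) (hempty : ∅ ∈ 𝒯) {J : ℕ}
    {𝒢 : κ → Finset (Finset α)} (h𝒢 : ∀ l, 𝒢 l ⊆ 𝒯) {N : κ → ℕ → Finset (Finset α)} {δ : κ → ℝ}
    (hδ : ∀ l, 0 < δ l) (hN : ∀ l j, IsNet (N l j) (𝒢 l) (2 ^ j * δ l)) (hJ : ∀ l, N l J = ∅)
    (hlinks : 10 * ∑ l, ∑ j ∈ range J, #(N l j) * (2 * j + 2) ≤ #Y) (hten : 10 ≤ #Y) :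
    ∃ χ : α → ℤ, (∀ x, |χ x| ≤ 1) ∧ #Y / 10 < #{x ∈ Y | χ x ≠ 0} ∧
      ∀ l, ∀ T ∈ 𝒢 l, |∑ x ∈ T, (χ x : ℝ)| ≤ 3 * √(Λ * δ l) := by
  have hmem : ∀ l j, ∀ T ∈ insert ∅ (N l j), T ∈ 𝒯 := fun l j =>
    forall_mem_insert _ _ _ |>.2 ⟨hempty, fun T hT => h𝒢 l ((hN l j).subset hT)⟩
  choose par hpar hdist using fun l j => (hN l j).exists_card_symmDiff_le
  -- One constraint for each pair of a point in one net and its parent in the next coarser net.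
  let ι := Σ p : κ × Fin J, {T // T ∈ N p.1 p.2}
  have h𝒢i : ∀ i : ι, i.2.1 ∈ 𝒢 i.1.1 := fun i => (hN i.1.1 i.1.2).subset i.2.2
  obtain ⟨χ, hχ, hcolored, hdev, hlink⟩ := exists_partial_coloring (ι := ι) hΛ.le hY hcard
    (F := fun i => i.2.1) (F' := fun i => par i.1.1 (i.1.2 + 1) i.2.1 (h𝒢i i))
    (fun i => h𝒢 _ (h𝒢i i)) (fun i => hmem _ _ _ (hpar _ _ _ _))
    (Δ := fun i => √(Λ * δ i.1.1) / 2 ^ (i.1.2 : ℕ)) (bits := fun i => 2 * i.1.2 + 2)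
    (fun i => sqrt_mul_lt_two_pow_mul_div hΛ (hδ _) (hdist _ _ _ _))
    (Nat.div_pos hten (by norm_num)) (Nat.mul_div_le _ _) (by
      rw [Nat.le_div_iff_mul_le (by norm_num), mul_comm]
      convert hlinks using 2
      simp only [ι, Fintype.sum_sigma, Fintype.sum_prod_type, sum_const, card_univ,
        Fintype.card_coe, smul_eq_mul, sum_range])
  refine ⟨χ, hχ, hcolored, fun l T hT => ?_⟩
  have hchain : ∀ P ∈ insert ∅ (N l 0), |∑ x ∈ P, (χ x : ℝ)| ≤ 2 * √(Λ * δ l) := fun P hP => by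
    have := abs_le_of_forall_exists_abs_sub_le (N := fun j => insert ∅ (N l j))
      (s := fun T => ∑ x ∈ T, (χ x : ℝ)) (σ := √(Λ * δ l)) (J := J) (by simp [hJ])
      (Real.sqrt_nonneg _) (fun j hj => forall_mem_insert _ _ _ |>.2
        ⟨⟨∅, mem_insert_self _ _, by
          simp only [sum_empty, sub_self, abs_zero]
          positivity⟩, fun S hS =>
          ⟨_, hpar l (j + 1) S ((hN l j).subset hS), hlink ⟨(l, ⟨j, hj⟩), S, hS⟩⟩⟩)
      (Nat.zero_le J) hP
    simpa using this
  have hfirst : |∑ x ∈ T, (χ x : ℝ) - ∑ x ∈ par l 0 T hT, (χ x : ℝ)| ≤ √(Λ * δ l) :=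
    (hdev T (h𝒢 l hT) _ (hmem _ _ _ (hpar l 0 T hT))).trans (Real.sqrt_le_sqrt (by
      gcongr
      simpa using hdist l 0 T hT))
  calc |∑ x ∈ T, (χ x : ℝ)|
      ≤ |∑ x ∈ T, (χ x : ℝ) - ∑ x ∈ par l 0 T hT, (χ x : ℝ)| +
          |∑ x ∈ par l 0 T hT, (χ x : ℝ)| := by
        simpa only [sub_add_cancel] using abs_add_le
          (∑ x ∈ T, (χ x : ℝ) - ∑ x ∈ par l 0 T hT, (χ x : ℝ)) (∑ x ∈ par l 0 T hT, (χ x : ℝ))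
    _ ≤ √(Λ * δ l) + 2 * √(Λ * δ l) := add_le_add hfirst (hchain _ (hpar l 0 T hT))
    _ = 3 * √(Λ * δ l) := by ring

theorem sum_range_two_mul_add_two_div_two_pow_le (J : ℕ) :
    ∑ j ∈ range J, (2 * (j : ℝ) + 2) / 2 ^ j ≤ 8 := by
  have hclosed : ∑ j ∈ range J, (2 * (j : ℝ) + 2) / 2 ^ j = 8 - (4 * (J : ℝ) + 8) / 2 ^ J := by
    induction J with
    | zero => norm_num
    | succ J ih =>
      rw [sum_range_succ, ih, pow_succ]
      push_cast
      field_simp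
      ring
  rw [hclosed]
  exact sub_le_self _ (by positivity)

theorem ten_mul_sum_mul_two_mul_add_two_le {M m : ℕ} {c : Fin M → ℕ → ℕ}
    (hc : ∀ l j, c l j * 2 ^ j * (80 * M) ≤ m) (J : ℕ) :
    10 * ∑ l, ∑ j ∈ range J, c l j * (2 * j + 2) ≤ m := by
  obtain rfl | hM := M.eq_zero_or_pos
  · simp
  have hterm : ∀ l j, (c l j : ℝ) ≤ m / (80 * M) / 2 ^ j := fun l j => by
    rw [le_div_iff₀ (by positivity), le_div_iff₀ (by positivity)]
    exact mod_cast hc l j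
  have hsum : 10 * ∑ l, ∑ j ∈ range J, (c l j : ℝ) * (2 * j + 2) ≤ m :=
    calc 10 * ∑ l, ∑ j ∈ range J, (c l j : ℝ) * (2 * j + 2)
        ≤ 10 * ∑ _l : Fin M, ∑ j ∈ range J, m / (80 * M) / 2 ^ j * (2 * (j : ℝ) + 2) := by
          gcongr with l _ j _
          exact hterm l j
      _ = 10 * ∑ _l : Fin M, m / (80 * M) * ∑ j ∈ range J, (2 * (j : ℝ) + 2) / 2 ^ j := by
          simp only [div_mul_eq_mul_div, ← mul_div_assoc, mul_sum]
      _ ≤ 10 * ∑ _l : Fin M, m / (80 * M) * (8 : ℝ) := by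
          gcongr
          exact sum_range_two_mul_add_two_div_two_pow_le J
      _ = m := by
          rw [sum_const, card_univ, Fintype.card_fin, nsmul_eq_mul]
          field_simp
          ring
  exact_mod_cast hsum

theorem HasTraceBound.exists_partial_coloring {Y : Finset α} {𝒯 : Finset (Finset α)} {C Λ : ℝ}
    {a b M : ℕ} (h : HasTraceBound Y 𝒯 C a b) (hab : a + b ≠ 0) (hY : ∀ T ∈ 𝒯, T ⊆ Y)
    (hempty : ∅ ∈ 𝒯) (hten : 10 ≤ #Y) (hΛ : 0 < Λ)
    (hcard : (#𝒯 : ℝ) ^ 2 * (2 * Real.exp (-Λ / 2)) ≤ 1 / 2) {δ : ℕ → ℝ} (hδ : ∀ l, 0 < δ l)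
    (hpack : ∀ l, packingConst C a b * (#Y : ℝ) ^ a * (2 ^ l) ^ b * (80 * M) ≤
      #Y * δ l ^ (a + b)) :
    ∃ χ : α → ℤ, (∀ x, |χ x| ≤ 1) ∧ #Y / 10 < #{x ∈ Y | χ x ≠ 0} ∧
      ∀ l < M, ∀ T ∈ 𝒯, #T ≤ 2 ^ l → |∑ x ∈ T, (χ x : ℝ)| ≤ 3 * √(Λ * δ l) := by
  have hnet : ∀ (l : Fin M) (j : ℕ), ∃ N, IsNet N {T ∈ 𝒯 | #T ≤ 2 ^ (l : ℕ)} (2 ^ j * δ l) ∧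
      #N * (2 ^ j * δ l) ^ (a + b) ≤
        packingConst C a b * (#Y : ℝ) ^ a * ((2 ^ (l : ℕ) : ℕ) : ℝ) ^ b := fun l j =>
    (h.mono Subset.rfl (filter_subset _ _)).exists_isNet (card_pos.1 (by lia))
      (fun T hT => hY T (mem_filter.1 hT).1) (fun T hT => (mem_filter.1 hT).2)
      (mul_pos (by positivity) (hδ l))
  choose N hN hNcard using hnet
  have hsize : ∀ l j, #(N l j) * 2 ^ j * (80 * M) ≤ #Y := fun l j => by
    have hδl : 0 < δ l ^ (a + b) := pow_pos (hδ l) _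
    have : (#(N l j) * 2 ^ j * (80 * M) * δ l ^ (a + b) : ℝ) ≤ #Y * δ l ^ (a + b) :=
      calc (#(N l j) * 2 ^ j * (80 * M) * δ l ^ (a + b) : ℝ)
          ≤ #(N l j) * (2 ^ j) ^ (a + b) * (80 * M) * δ l ^ (a + b) := by
            gcongr
            exact le_self_pow₀ (one_le_pow₀ one_le_two) hab
        _ = #(N l j) * (2 ^ j * δ l) ^ (a + b) * (80 * M) := by rw [mul_pow]; ring
        _ ≤ packingConst C a b * (#Y : ℝ) ^ a * (2 ^ (l : ℕ)) ^ b * (80 * M) :=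
            mul_le_mul_of_nonneg_right (mod_cast hNcard l j) (by positivity)
        _ ≤ #Y * δ l ^ (a + b) := hpack l
    exact_mod_cast le_of_mul_le_mul_right this hδl
  have hlast : ∀ l, N l #Y = ∅ := fun l => by
    by_contra hne
    have hpos : 0 < #(N l #Y) := card_pos.2 (nonempty_iff_ne_empty.2 hne)
    refine (Nat.lt_two_pow_self (n := #Y)).not_ge (le_trans ?_ (hsize l #Y))
    have hM : 0 < M := l.pos
    calc 2 ^ #Y = 1 * 2 ^ #Y * 1 := by ring
      _ ≤ #(N l #Y) * 2 ^ #Y * (80 * M) := by gcongr <;> lia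
  obtain ⟨χ, hχ, hcolored, hdisc⟩ := exists_partial_coloring_of_isNet (δ := fun l : Fin M => δ l)
    (𝒢 := fun l : Fin M => {T ∈ 𝒯 | #T ≤ 2 ^ (l : ℕ)}) hΛ hY hcard hempty
    (fun l => filter_subset _ _) (fun l => hδ l) hN hlast
    (ten_mul_sum_mul_two_mul_add_two_le hsize #Y) hten
  exact ⟨χ, hχ, hcolored, fun l hl T hT hTl => hdisc ⟨l, hl⟩ T (mem_filter.2 ⟨hT, hTl⟩)⟩

end Chaining

/-- The radius of the finest net for the sets of size at most `k` in a system with trace bound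
exponents `a`, `b` on `n` points. It is chosen so that shallow packing bounds the net by a
`1 / w`-fraction of the points, up to a constant. -/
noncomputable def netRadius (a b : ℕ) (w n k : ℝ) : ℝ :=
  (w * n ^ (a - 1) * k ^ b) ^ ((a + b : ℕ) : ℝ)⁻¹

theorem netRadius_pow {a b : ℕ} (hab : a + b ≠ 0) {w n k : ℝ} (hw : 0 ≤ w) (hn : 0 ≤ n)
    (hk : 0 ≤ k) : netRadius a b w n k ^ (a + b) = w * n ^ (a - 1) * k ^ b :=
  Real.rpow_inv_natCast_pow (by positivity) hab

theorem packingConst_mul_le_mul_netRadius_pow {a b : ℕ} (ha : a ≠ 0) {C k m n t w : ℝ}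
    (hw : packingConst C a b * t ≤ w) (hw0 : 0 ≤ w) (hk : 0 ≤ k) (hm : 0 ≤ m) (hmn : m ≤ n) :
    packingConst C a b * m ^ a * k ^ b * t ≤ m * netRadius a b w n k ^ (a + b) := by
  rw [netRadius_pow (by lia) hw0 (hm.trans hmn) hk, ← mul_pow_sub_one ha]
  calc packingConst C a b * (m * m ^ (a - 1)) * k ^ b * t
      = packingConst C a b * t * (m * m ^ (a - 1) * k ^ b) := by ring
    _ ≤ w * (m * n ^ (a - 1) * k ^ b) := by gcongr
    _ = m * (w * n ^ (a - 1) * k ^ b) := by ring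

theorem sqrt_mul_netRadius {a b : ℕ} (ha : a ≠ 0) {c A L n s : ℝ} (hc : 0 ≤ c) (hA : 0 ≤ A)
    (hL : 0 < L) (hn : 0 ≤ n) (hs : 0 ≤ s) :
    √(c * L * netRadius a b (A * L) n (2 * s)) =
      √c * (A * 2 ^ b) ^ (1 / (2 * (a + b : ℕ)) : ℝ) *
        (s ^ (1 / 2 - a / (2 * (a + b : ℕ)) : ℝ) * n ^ ((a - 1) / (2 * (a + b : ℕ)) : ℝ) *
          L ^ (1 / 2 + 1 / (2 * (a + b : ℕ)) : ℝ)) := by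
  have hab : ((a + b : ℕ) : ℝ) ≠ 0 := Nat.cast_ne_zero.2 (by lia)
  have hbase : A * L * n ^ (a - 1) * (2 * s) ^ b =
      A * 2 ^ b * s ^ (b : ℝ) * n ^ ((a - 1 : ℕ) : ℝ) * L := by
    rw [mul_pow, Real.rpow_natCast, Real.rpow_natCast]
    ring
  have hs_exp : (b : ℝ) * (1 / (2 * (a + b : ℕ))) = 1 / 2 - a / (2 * (a + b : ℕ)) := by
    field_simp
    push_cast
    ring
  have hn_exp : ((a - 1 : ℕ) : ℝ) * (1 / (2 * (a + b : ℕ))) = (a - 1) / (2 * (a + b : ℕ)) := by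
    rw [Nat.cast_pred (Nat.pos_of_ne_zero ha), mul_one_div]
  have hhalf : ((a + b : ℕ) : ℝ)⁻¹ * (1 / 2) = 1 / (2 * (a + b : ℕ)) := by field_simp
  rw [netRadius, hbase, Real.sqrt_mul (by positivity), Real.sqrt_mul hc, Real.sqrt_eq_rpow (_ ^ _),
    ← Real.rpow_mul (by positivity), hhalf, Real.mul_rpow (by positivity) hL.le,
    Real.mul_rpow (by positivity) (by positivity), Real.mul_rpow (by positivity) (by positivity),
    ← Real.rpow_mul hs, ← Real.rpow_mul hn, Real.sqrt_eq_rpow L, Real.rpow_add hL, hs_exp, hn_exp]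
  ring

theorem one_le_logb_two {n : ℝ} (hn : 2 ≤ n) : 1 ≤ Real.logb 2 n := by
  rwa [Real.le_logb_iff_rpow_le one_lt_two (two_pos.trans_le hn), Real.rpow_one]

theorem log_le_logb_two {n : ℝ} (hn : 1 ≤ n) : Real.log n ≤ Real.logb 2 n :=
  le_div_self (Real.log_nonneg hn) (Real.log_pos one_lt_two)
    (Real.log_two_lt_d9.le.trans (by norm_num))

theorem le_pow_ceil_seven_mul_logb_two {n : ℝ} (hn : 1 ≤ n) :
    n ≤ (10 / 9) ^ ⌈7 * Real.logb 2 n⌉₊ := by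
  have hlog : 0 ≤ Real.logb 2 n := Real.logb_nonneg one_lt_two hn
  calc n = 2 ^ Real.logb 2 n :=
        (Real.rpow_logb two_pos one_lt_two.ne' (one_pos.trans_le hn)).symm
    _ ≤ ((10 / 9) ^ (7 : ℝ)) ^ Real.logb 2 n := by
        gcongr
        norm_num
    _ = (10 / 9) ^ (7 * Real.logb 2 n) := (Real.rpow_mul (by norm_num) _ _).symm
    _ ≤ (10 / 9) ^ (⌈7 * Real.logb 2 n⌉₊ : ℝ) :=
        Real.rpow_le_rpow_of_exponent_le (by norm_num) (Nat.le_ceil _)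
    _ = (10 / 9) ^ ⌈7 * Real.logb 2 n⌉₊ := Real.rpow_natCast _ _

/-- The multiple of `log₂ n` at which a union bound over the pairs of a family of at most
`C * n ^ d` sets succeeds. -/
noncomputable def deviationConst (C : ℝ) (d : ℕ) : ℝ := 2 * Real.log (4 * C ^ 2) + 4 * d

theorem deviationConst_pos {C : ℝ} (hC : 1 ≤ C) (d : ℕ) : 0 < deviationConst C d := by
  have : 0 < Real.log (4 * C ^ 2) := Real.log_pos (by nlinarith)
  unfold deviationConst
  positivity

theorem sq_mul_exp_neg_le_half {C n t : ℝ} {d : ℕ} (hC : 1 ≤ C) (hn : 2 ≤ n) (ht : 0 ≤ t)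
    (htn : t ≤ C * n ^ d) :
    t ^ 2 * (2 * Real.exp (-(deviationConst C d * Real.logb 2 n) / 2)) ≤ 1 / 2 := by
  have hn1 : 1 ≤ n := one_le_two.trans hn
  have hn0 : 0 < n := one_pos.trans_le hn1
  have hlog : 0 ≤ Real.log (4 * C ^ 2) := Real.log_nonneg (by nlinarith)
  have hexp : 4 * t ^ 2 ≤ Real.exp (deviationConst C d * Real.logb 2 n / 2) :=
    calc 4 * t ^ 2 ≤ 4 * (C * n ^ d) ^ 2 := by gcongr
      _ = Real.exp (Real.log (4 * C ^ 2) + 2 * d * Real.log n) := by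
          rw [Real.exp_add, Real.exp_log (by positivity), mul_comm _ (Real.log n),
            ← Real.rpow_def_of_pos hn0, mul_comm (2 : ℝ), Real.rpow_mul hn0.le, Real.rpow_natCast,
            Real.rpow_two]
          ring
      _ ≤ Real.exp (Real.log (4 * C ^ 2) * Real.logb 2 n + 2 * d * Real.logb 2 n) := by
          gcongr
          · exact le_mul_of_one_le_right hlog (one_le_logb_two hn)
          · exact log_le_logb_two hn1
      _ = Real.exp (deviationConst C d * Real.logb 2 n / 2) := by
          rw [deviationConst]
          ring_nf
  rw [neg_div, Real.exp_neg, ← div_eq_mul_inv, ← mul_div_assoc, div_le_iff₀ (Real.exp_pos _)]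
  linarith

/-- The factor `A` for which nets of radius `netRadius a b (A * log₂ n) n k` are small enough at
all of the at most `3 * log₂ n` dyadic size levels `k`. -/
noncomputable def netConst (C : ℝ) (a b : ℕ) : ℝ := max (240 * packingConst C a b) 1

theorem netConst_pos (C : ℝ) (a b : ℕ) : 0 < netConst C a b :=
  one_pos.trans_le (le_max_right _ _)

/-- The factor `K` of the discrepancy bound for trace bound `C * m ^ a * k ^ b`. -/
noncomputable def discrepancyConst (C : ℝ) (a b : ℕ) : ℝ :=
  24 * (√(deviationConst C (a + b)) * (netConst C a b * 2 ^ b) ^ (1 / (2 * (a + b : ℕ)) : ℝ)) + 10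

theorem discrepancyConst_pos (C : ℝ) (a b : ℕ) : 0 < discrepancyConst C a b := by
  have := netConst_pos C a b
  unfold discrepancyConst
  positivity

theorem packingConst_mul_le_netConst_mul_logb {C : ℝ} (hC : 0 ≤ C) (a b : ℕ) {n : ℕ} (hn : 2 ≤ n) :
    packingConst C a b * (80 * (Nat.log 2 n + 2)) ≤ netConst C a b * Real.logb 2 n := by
  have hlog : (Nat.log 2 n : ℝ) ≤ Real.logb 2 n := mod_cast Real.natLog_le_logb n 2
  have hlog1 : 1 ≤ Real.logb 2 n := one_le_logb_two (by exact_mod_cast hn)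
  have := packingConst_nonneg hC a b
  calc packingConst C a b * (80 * (Nat.log 2 n + 2))
      ≤ packingConst C a b * (80 * (Real.logb 2 n + 2 * Real.logb 2 n)) := by
        gcongr
        exact le_mul_of_one_le_right zero_le_two hlog1
    _ = 240 * packingConst C a b * Real.logb 2 n := by ring
    _ ≤ netConst C a b * Real.logb 2 n := by
        gcongr
        exact le_max_left _ _

theorem logb_mul_sqrt_add_le_discrepancyConst_mul {a b : ℕ} (ha : a ≠ 0) {C L n s : ℝ}
    (hC : 1 ≤ C) (hL : 1 ≤ L) (hn : 1 ≤ n) (hs : 1 ≤ s) :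
    8 * L * (3 * √(deviationConst C (a + b) * L *
        netRadius a b (netConst C a b * L) n (2 * s))) + 10 ≤
      discrepancyConst C a b * s ^ (1 / 2 - a / (2 * (a + b : ℕ)) : ℝ) *
        n ^ ((a - 1) / (2 * (a + b : ℕ)) : ℝ) * L ^ (3 / 2 + 1 / (2 * (a + b : ℕ)) : ℝ) := by
  have hL0 : 0 < L := one_pos.trans_le hL
  have ha1 : (1 : ℝ) ≤ a := Nat.one_le_cast.2 (Nat.pos_of_ne_zero ha)
  have hLpow : L ^ (3 / 2 + 1 / (2 * (a + b : ℕ)) : ℝ) =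
      L * L ^ (1 / 2 + 1 / (2 * (a + b : ℕ)) : ℝ) := by
    rw [← Real.rpow_one_add' hL0.le (by positivity)]
    ring_nf
  have hs_exp : (0 : ℝ) ≤ 1 / 2 - a / (2 * (a + b : ℕ)) := by
    rw [sub_nonneg, div_le_div_iff₀ (by positivity) two_pos]
    push_cast
    linarith
  have hone : 1 ≤ s ^ (1 / 2 - a / (2 * (a + b : ℕ)) : ℝ) *
      n ^ ((a - 1) / (2 * (a + b : ℕ)) : ℝ) * L ^ (3 / 2 + 1 / (2 * (a + b : ℕ)) : ℝ) :=
    one_le_mul_of_one_le_of_one_le (one_le_mul_of_one_le_of_one_le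
      (Real.one_le_rpow hs hs_exp) (Real.one_le_rpow hn (div_nonneg (by linarith) (by positivity))))
      (Real.one_le_rpow hL (by positivity))
  rw [sqrt_mul_netRadius ha (deviationConst_pos hC _).le (netConst_pos C a b).le hL0
    (zero_le_one.trans hn) (zero_le_one.trans hs), discrepancyConst]
  rw [hLpow] at hone ⊢
  linarith

section Iteration

variable {α : Type*} [DecidableEq α]

theorem exists_coloring_of_partial_of_uncolored {Y : Finset α} {𝒮 : Finset (Finset α)}
    {χ₀ χ₁ : α → ℤ} {B₀ B₁ : Finset α → ℝ} (hχ₀ : ∀ x, |χ₀ x| ≤ 1)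
    (hχ₁ : ∀ x ∈ ({x ∈ Y | χ₀ x = 0} : Finset α), χ₁ x = 1 ∨ χ₁ x = -1)
    (hB₀ : ∀ S ∈ 𝒮, |∑ x ∈ S ∩ Y, (χ₀ x : ℝ)| ≤ B₀ S)
    (hB₁ : ∀ S ∈ 𝒮, |∑ x ∈ S ∩ {x ∈ Y | χ₀ x = 0}, (χ₁ x : ℝ)| ≤ B₁ S) :
    ∃ χ : α → ℤ, (∀ x ∈ Y, χ x = 1 ∨ χ x = -1) ∧
      ∀ S ∈ 𝒮, |∑ x ∈ S ∩ Y, (χ x : ℝ)| ≤ B₀ S + B₁ S := by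
  refine ⟨fun x => if χ₀ x = 0 then χ₁ x else χ₀ x, fun x hx => ?_, fun S hS => ?_⟩
  · dsimp only
    split_ifs with hzero
    · exact hχ₁ x (mem_filter.2 ⟨hx, hzero⟩)
    · rcases Int.abs_le_one_iff.1 (hχ₀ x) with h | h
      · exact absurd h hzero
      · exact h
  · have hsum : ∑ x ∈ S ∩ Y, ((if χ₀ x = 0 then χ₁ x else χ₀ x : ℤ) : ℝ) =
        ∑ x ∈ S ∩ Y, (χ₀ x : ℝ) + ∑ x ∈ S ∩ {x ∈ Y | χ₀ x = 0}, (χ₁ x : ℝ) := by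
      rw [inter_filter, sum_filter, ← sum_add_distrib]
      refine sum_congr rfl fun x _ => ?_
      split_ifs with hzero
      · rw [hzero, Int.cast_zero, zero_add]
      · rw [add_zero]
    rw [hsum]
    exact (abs_add_le _ _).trans (add_le_add (hB₀ S hS) (hB₁ S hS))

theorem exists_coloring_of_exists_partial_coloring {X : Finset α} {𝒮 : Finset (Finset α)}
    {B : Finset α → ℝ} {m : ℕ} (hB : ∀ S ∈ 𝒮, 0 ≤ B S)
    (hstep : ∀ Y ⊆ X, m ≤ #Y → ∃ χ : α → ℤ, (∀ x, |χ x| ≤ 1) ∧ #Y / 10 < #{x ∈ Y | χ x ≠ 0} ∧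
      ∀ S ∈ 𝒮, |∑ x ∈ S ∩ Y, (χ x : ℝ)| ≤ B S)
    (r : ℕ) {Y : Finset α} (hYX : Y ⊆ X) (hY : (#Y : ℝ) ≤ m * (10 / 9) ^ r) :
    ∃ χ : α → ℤ, (∀ x ∈ Y, χ x = 1 ∨ χ x = -1) ∧
      ∀ S ∈ 𝒮, |∑ x ∈ S ∩ Y, (χ x : ℝ)| ≤ r * B S + m := by
  induction r generalizing Y with
  | zero =>
    rw [pow_zero, mul_one] at hY
    refine ⟨fun _ => 1, fun _ _ => Or.inl rfl, fun S _ => ?_⟩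
    simp only [Nat.cast_zero, zero_mul, zero_add, Int.cast_one, sum_const, nsmul_one, Nat.abs_cast]
    exact (Nat.cast_le.2 (card_le_card inter_subset_right)).trans hY
  | succ r ih =>
    obtain hlarge | hsmall := le_total m #Y
    · obtain ⟨χ₀, hχ₀, hcolored, hB₀⟩ := hstep Y hYX hlarge
      have hcard : #{x ∈ Y | χ₀ x = 0} + #{x ∈ Y | χ₀ x ≠ 0} = #Y :=
        card_filter_add_card_filter_not _
      have hshrink : (#{x ∈ Y | χ₀ x = 0} * 10 : ℝ) ≤ 9 * #Y := by
        exact_mod_cast (by lia : #{x ∈ Y | χ₀ x = 0} * 10 ≤ 9 * #Y)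
      have huncolored : (#{x ∈ Y | χ₀ x = 0} : ℝ) ≤ m * (10 / 9) ^ r :=
        calc (#{x ∈ Y | χ₀ x = 0} : ℝ) ≤ 9 * #Y / 10 := (le_div_iff₀ (by norm_num)).2 hshrink
          _ ≤ 9 * (m * (10 / 9) ^ (r + 1)) / 10 := by gcongr
          _ = m * (10 / 9) ^ r := by ring
      obtain ⟨χ₁, hχ₁, hB₁⟩ := ih ((filter_subset _ _).trans hYX) huncolored
      obtain ⟨χ, hχ, hdisc⟩ := exists_coloring_of_partial_of_uncolored hχ₀ hχ₁ hB₀ hB₁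
      refine ⟨χ, hχ, fun S hS => (hdisc S hS).trans_eq ?_⟩
      push_cast
      ring
    · have hY' : (#Y : ℝ) ≤ m * (10 / 9) ^ r :=
        (Nat.cast_le.2 hsmall).trans (le_mul_of_one_le_right (Nat.cast_nonneg m)
          (one_le_pow₀ (by norm_num)))
      obtain ⟨χ, hχ, hdisc⟩ := ih hYX hY'
      refine ⟨χ, hχ, fun S hS => (hdisc S hS).trans ?_⟩
      have := hB S hS
      gcongr
      exact r.le_succ

theorem exists_lt_le_two_pow_le_two_mul {m : ℕ} (hm : m ≠ 0) :
    ∃ l < Nat.log 2 m + 2, m ≤ 2 ^ l ∧ 2 ^ l ≤ 2 * m :=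
  ⟨Nat.log 2 m + 1, Nat.lt_succ_self _, (Nat.lt_pow_succ_log_self one_lt_two m).le, by
    rw [pow_succ']
    exact Nat.mul_le_mul_left 2 (Nat.pow_log_le_self 2 hm)⟩

theorem HasTraceBound.exists_partial_coloring_inter {X Y : Finset α} {𝒮 : Finset (Finset α)}
    {C Λ w : ℝ} {a b : ℕ} (h : HasTraceBound X 𝒮 C a b) (ha : a ≠ 0) (hempty : ∅ ∈ 𝒮)
    (hΛ : 0 < Λ) (hcard : (#𝒮 : ℝ) ^ 2 * (2 * Real.exp (-Λ / 2)) ≤ 1 / 2) (hw : 0 < w)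
    (hwM : packingConst C a b * (80 * (Nat.log 2 #X + 2)) ≤ w) (hYX : Y ⊆ X) (hten : 10 ≤ #Y) :
    ∃ χ : α → ℤ, (∀ x, |χ x| ≤ 1) ∧ #Y / 10 < #{x ∈ Y | χ x ≠ 0} ∧
      ∀ S ∈ 𝒮, |∑ x ∈ S ∩ Y, (χ x : ℝ)| ≤ 3 * √(Λ * netRadius a b w #X (2 * #S)) := by
  have hcardX : #Y ≤ #X := card_le_card hYX
  have hX : (0 : ℝ) < #X := Nat.cast_pos.2 (by lia)
  have himage : #(𝒮.image (· ∩ Y)) ≤ #𝒮 := card_image_le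
  have hcardY : (#(𝒮.image (· ∩ Y)) : ℝ) ^ 2 * (2 * Real.exp (-Λ / 2)) ≤ 1 / 2 :=
    le_trans (by gcongr) hcard
  have htrace : ∀ T ∈ 𝒮.image (· ∩ Y), T ⊆ Y := forall_mem_image.2 fun S _ => inter_subset_right
  obtain ⟨χ, hχ, hcolored, hdisc⟩ := (h.trace hYX).exists_partial_coloring
    (M := Nat.log 2 #X + 2) (δ := fun l => netRadius a b w #X (2 ^ l)) (by lia) htrace
    (mem_image.2 ⟨∅, hempty, empty_inter Y⟩) hten hΛ hcardY
    (fun l => Real.rpow_pos_of_pos (by positivity) _)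
    (fun l => packingConst_mul_le_mul_netRadius_pow ha (mod_cast hwM) hw.le (by positivity)
      (Nat.cast_nonneg _) (Nat.cast_le.2 hcardX))
  refine ⟨χ, hχ, hcolored, fun S hS => ?_⟩
  obtain hT | hT := (S ∩ Y).eq_empty_or_nonempty
  · rw [hT, sum_empty, abs_zero]
    positivity
  obtain ⟨l, hl, hTl, hlT⟩ := exists_lt_le_two_pow_le_two_mul hT.card_ne_zero
  have hlX : l < Nat.log 2 #X + 2 := hl.trans_le (Nat.add_le_add_right
    (Nat.log_mono_right (card_le_card (inter_subset_right.trans hYX))) 2)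
  refine (hdisc l hlX _ (mem_image_of_mem _ hS) hTl).trans ?_
  have hlS : (2 : ℝ) ^ l ≤ 2 * #S :=
    mod_cast hlT.trans (Nat.mul_le_mul_left 2 (card_le_card inter_subset_left))
  unfold netRadius
  gcongr

theorem hasTraceBound_insert_empty {X : Finset α} {𝒮 : Finset (Finset α)} {C : ℝ} {a b : ℕ}
    (hC : 0 ≤ C) (h : ∀ Y ⊆ X, ∀ k : ℕ, 1 ≤ k → k ≤ #Y →
      (#{Q ∈ 𝒮.image (· ∩ Y) | #Q ≤ k} : ℝ) ≤ C * (#Y : ℝ) ^ a * (k : ℝ) ^ b) :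
    HasTraceBound X (insert ∅ 𝒮) (C + 1) a b := by
  intro Y hY hne k hk
  have hsub : {Q ∈ (insert ∅ 𝒮).image (· ∩ Y) | #Q ≤ k} ⊆
      insert ∅ {Q ∈ 𝒮.image (· ∩ Y) | #Q ≤ min k #Y} := fun Q hQ => by
    obtain ⟨hQ, hQk⟩ := mem_filter.1 hQ
    obtain ⟨S, hS, rfl⟩ := mem_image.1 hQ
    obtain rfl | hS := mem_insert.1 hS
    · exact mem_insert.2 (Or.inl (empty_inter Y))
    · exact mem_insert_of_mem (mem_filter.2 ⟨mem_image_of_mem _ hS,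
        le_min hQk (card_le_card inter_subset_right)⟩)
  have hY1 : (1 : ℝ) ≤ #Y := Nat.one_le_cast.2 hne.card_pos
  have hk1 : (1 : ℝ) ≤ k := Nat.one_le_cast.2 hk
  calc (#{Q ∈ (insert ∅ 𝒮).image (· ∩ Y) | #Q ≤ k} : ℝ)
      ≤ #{Q ∈ 𝒮.image (· ∩ Y) | #Q ≤ min k #Y} + 1 :=
        mod_cast (card_le_card hsub).trans (card_insert_le _ _)
    _ ≤ C * (#Y : ℝ) ^ a * ((min k #Y : ℕ) : ℝ) ^ b + 1 :=
        add_le_add_left (h Y hY _ (le_min hk hne.card_pos) (min_le_right _ _)) 1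
    _ ≤ C * (#Y : ℝ) ^ a * (k : ℝ) ^ b + (#Y : ℝ) ^ a * (k : ℝ) ^ b := by
        gcongr
        · exact min_le_left _ _
        · exact one_le_mul_of_one_le_of_one_le (one_le_pow₀ hY1) (one_le_pow₀ hk1)
    _ = (C + 1) * (#Y : ℝ) ^ a * (k : ℝ) ^ b := by ring

theorem HasTraceBound.exists_coloring {X : Finset α} {𝒮 : Finset (Finset α)} {C : ℝ} {a b : ℕ}
    (h : HasTraceBound X 𝒮 C a b) (hC : 1 ≤ C) (ha : a ≠ 0) (hempty : ∅ ∈ 𝒮)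
    (hsub : ∀ S ∈ 𝒮, S ⊆ X) (hX : 2 ≤ #X) :
    ∃ χ : α → ℤ, (∀ x ∈ X, χ x = 1 ∨ χ x = -1) ∧ ∀ S ∈ 𝒮, |∑ x ∈ S, (χ x : ℝ)| ≤
      8 * Real.logb 2 #X * (3 * √(deviationConst C (a + b) * Real.logb 2 #X *
        netRadius a b (netConst C a b * Real.logb 2 #X) #X (2 * #S))) + 10 := by
  have hn : (2 : ℝ) ≤ #X := mod_cast hX
  have hn1 : (1 : ℝ) ≤ #X := one_le_two.trans hn
  have hlog : 1 ≤ Real.logb 2 #X := one_le_logb_two hn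
  have hlog0 : 0 < Real.logb 2 #X := one_pos.trans_le hlog
  have hcard : (#𝒮 : ℝ) ≤ C * (#X : ℝ) ^ (a + b) := by
    rw [pow_add, ← mul_assoc]
    exact h.card_le (card_pos.1 (by lia)) hsub (by lia) fun S hS => card_le_card (hsub S hS)
  have hrounds : (⌈7 * Real.logb 2 #X⌉₊ : ℝ) ≤ 8 * Real.logb 2 #X :=
    (Nat.ceil_lt_add_one (by positivity)).le.trans (by linarith)
  obtain ⟨χ, hχ, hdisc⟩ := exists_coloring_of_exists_partial_coloring (m := 10)
    (fun _ _ => by positivity)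
    (fun Y hYX => h.exists_partial_coloring_inter ha hempty
      (mul_pos (deviationConst_pos hC (a + b)) hlog0)
      (sq_mul_exp_neg_le_half hC hn (Nat.cast_nonneg _) hcard)
      (mul_pos (netConst_pos C a b) hlog0)
      (packingConst_mul_le_netConst_mul_logb (zero_le_one.trans hC) a b hX) hYX)
    ⌈7 * Real.logb 2 #X⌉₊ Subset.rfl
    ((le_pow_ceil_seven_mul_logb_two hn1).trans
      (le_mul_of_one_le_left (by positivity) (by norm_num)))
  refine ⟨χ, hχ, fun S hS => ?_⟩
  have hbound := hdisc S hS
  rw [inter_eq_left.2 (hsub S hS)] at hbound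
  refine hbound.trans (add_le_add ?_ (by norm_num))
  gcongr

end Iteration

theorem stmt11_general (d d₁ : ℕ) (hd₁ : 1 ≤ d₁) (hd₁d : d₁ ≤ d) (C : ℝ) (hC : 0 < C) :
    ∃ K : ℝ, 0 < K ∧ ∃ n₀ : ℕ,
      ∀ (α : Type*) [DecidableEq α] (X : Finset α) (𝒮 : Finset (Finset α)),
        n₀ ≤ #X → (∀ S ∈ 𝒮, S ⊆ X) →
        (∀ Y ⊆ X, ∀ k : ℕ, 1 ≤ k → k ≤ #Y →
          (#{T ∈ 𝒮.image (· ∩ Y) | #T ≤ k} : ℝ) ≤ C * (#Y : ℝ) ^ d₁ * (k : ℝ) ^ (d - d₁)) →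
        ∃ χ : α → ℤ, (∀ x ∈ X, χ x = 1 ∨ χ x = -1) ∧
          ∀ S ∈ 𝒮, |∑ x ∈ S, (χ x : ℝ)| ≤
            K * (#S : ℝ) ^ ((1 : ℝ) / 2 - d₁ / (2 * d)) * (#X : ℝ) ^ (((d₁ : ℝ) - 1) / (2 * d)) *
              Real.logb 2 #X ^ ((3 : ℝ) / 2 + 1 / (2 * d)) := by
  obtain ⟨b, rfl⟩ := Nat.exists_eq_add_of_le hd₁d
  simp only [add_tsub_cancel_left]
  refine ⟨discrepancyConst (C + 1) d₁ b, discrepancyConst_pos _ _ _, 2,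
    fun α _ X 𝒮 hX hsub hcount => ?_⟩
  have hn : (2 : ℝ) ≤ #X := mod_cast hX
  have hC1 : 1 ≤ C + 1 := le_add_of_nonneg_left hC.le
  have ha : d₁ ≠ 0 := Nat.one_le_iff_ne_zero.1 hd₁
  obtain ⟨χ, hχ, hdisc⟩ := (hasTraceBound_insert_empty hC.le hcount).exists_coloring hC1 ha
    (mem_insert_self _ _) (forall_mem_insert _ _ _ |>.2 ⟨empty_subset X, hsub⟩) hX
  refine ⟨χ, hχ, fun S hS => ?_⟩
  obtain rfl | hne := S.eq_empty_or_nonempty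
  · have := discrepancyConst_pos (C + 1) d₁ b
    have := one_le_logb_two hn
    rw [sum_empty, abs_zero]
    positivity
  · exact (hdisc S (mem_insert_of_mem hS)).trans (logb_mul_sqrt_add_le_discrepancyConst_mul ha hC1
      (one_le_logb_two hn) (one_le_two.trans hn) (Nat.one_le_cast.2 hne.card_pos))

/-- size-sensitive discrepancy bound, main theorem.
Let `d > 1`, `1 ≤ d₁ ≤ d` be integers and `C > 0`. There exist `K > 0` and `n₀`
(depending only on `d`, `d₁`, `C`) such that for every set system `(X, 𝒮)` with
`|X| = n ≥ n₀` satisfying the size-sensitive counting condition with parameters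
`(C, d, d₁)`, there exists a coloring `χ : X → {−1, +1}` with
`|∑_{x ∈ S} χ(x)| ≤ K · |S|^{1/2 − d₁/(2d)} · n^{(d₁ − 1)/(2d)} · (log₂ n)^{3/2 + 1/(2d)}`
for every `S ∈ 𝒮`. -/
theorem stmt11 (d d₁ : ℕ) (hd : 1 < d) (hd₁ : 1 ≤ d₁) (hd₁d : d₁ ≤ d)
    (C : ℝ) (hC : 0 < C) :
    ∃ K : ℝ, 0 < K ∧ ∃ n₀ : ℕ,
      ∀ (α : Type) [DecidableEq α] (X : Finset α) (𝒮 : Finset (Finset α)),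
        n₀ ≤ X.card → (∀ S ∈ 𝒮, S ⊆ X) →
        (∀ Y ⊆ X, ∀ k : ℕ, 1 ≤ k → k ≤ Y.card →
          (((𝒮.image (· ∩ Y)).filter fun T => T.card ≤ k).card : ℝ) ≤
            C * (Y.card : ℝ) ^ d₁ * (k : ℝ) ^ (d - d₁)) →
        ∃ χ : α → ℤ,
          (∀ x ∈ X, χ x = 1 ∨ χ x = -1) ∧
          ∀ S ∈ 𝒮, |(∑ x ∈ S, (χ x : ℝ))| ≤
            K * (S.card : ℝ) ^ ((1 : ℝ) / 2 - (d₁ : ℝ) / (2 * (d : ℝ))) *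
              (X.card : ℝ) ^ (((d₁ : ℝ) - 1) / (2 * (d : ℝ))) *
              Real.logb 2 (X.card : ℝ) ^ ((3 : ℝ) / 2 + 1 / (2 * (d : ℝ))) :=
  stmt11_general d d₁ hd₁ hd₁d C hC
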